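/- arXiv:1703.06279 — 5 statements merged into one kernel-verified Lean document; each statement's English description precedes it below -/
import Mathlib

section
/- (Expurgation lemma.) Let 𝒳 be a finite alphabet, (Θ, w) a probability space, and {P_θ}_{θ∈Θ} a family of probability distributions on 𝒳 such that θ ↦ P_θ(x) is measurable for each x ∈ 𝒳. Define the mixed memoryless source P_{X^n}(x) = ∫_Θ ∏_{i=1}^n P_θ(x_i) dw(θ) for x = (x_1,…,x_n) ∈ 𝒳^n. For each x ∈ 𝒳^n let Θ(x) = { θ ∈ Θ : ∏_{i=1}^n P_θ(x_i) ≤ e^{n^{1/4}} P_{X^n}(x) }, and let Θ*_n = ⋂_{x ∈ 𝒳^n} Θ(x). Then w(Θ*_n) ≥ 1 − (n+1)^{|𝒳|} e^{-n^{1/4}}. -/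
open scoped BigOperators
open MeasureTheory

/-- **Expurgation lemma:** for the mixed memoryless source
`P_{X^n}(x) = ∫_Θ ∏ᵢ P_θ(xᵢ) dw(θ)`, the set
`Θ*_n = { θ : ∏ᵢ P_θ(xᵢ) ≤ e^{n^{1/4}} P_{X^n}(x) for all x }` satisfies
`w(Θ*_n) ≥ 1 − (n+1)^{|𝒳|} e^{−n^{1/4}}`. -/
theorem stmt_4 {𝒳 Θ : Type*} [Fintype 𝒳] [MeasurableSpace Θ]
    (w : Measure Θ) [IsProbabilityMeasure w]
    (P : Θ → 𝒳 → ℝ)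
    (hmeas : ∀ x : 𝒳, Measurable fun θ => P θ x)
    (hdist : ∀ θ, (∀ x, 0 ≤ P θ x) ∧ (∑ x, P θ x) = 1)
    (n : ℕ) (hn : 0 < n)
    (PX : (Fin n → 𝒳) → ℝ)
    (hPX : ∀ x : Fin n → 𝒳, PX x = ∫ θ, (∏ i, P θ (x i)) ∂w) :
    1 - ((n : ℝ) + 1) ^ (Fintype.card 𝒳) * Real.exp (-((n : ℝ) ^ ((1 : ℝ) / 4))) ≤
      (w {θ | ∀ x : Fin n → 𝒳,
        (∏ i, P θ (x i)) ≤ Real.exp ((n : ℝ) ^ ((1 : ℝ) / 4)) * PX x}).toReal := by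
  classical
  set c : ℝ := (n : ℝ) ^ ((1 : ℝ) / 4) with hc
  have hf0 : ∀ (x : Fin n → 𝒳) θ, 0 ≤ ∏ i, P θ (x i) :=
    fun x θ => Finset.prod_nonneg fun i _ => (hdist θ).1 _
  have hle1 : ∀ θ a, P θ a ≤ 1 := fun θ a => by
    rw [← (hdist θ).2]
    exact Finset.single_le_sum (f := fun a => P θ a) (fun b _ => (hdist θ).1 b) (Finset.mem_univ a)
  have hf1 : ∀ (x : Fin n → 𝒳) θ, ∏ i, P θ (x i) ≤ 1 :=
    fun x θ => Finset.prod_le_one (fun i _ => (hdist θ).1 _) fun i _ => hle1 _ _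
  have hint : ∀ x : Fin n → 𝒳, Integrable (fun θ => ∏ i, P θ (x i)) w := fun x => by
    refine Integrable.of_bound (C := 1)
      (Finset.measurable_prod _ fun i _ => hmeas (x i)).aestronglyMeasurable ?_
    filter_upwards with θ
    rw [Real.norm_of_nonneg (hf0 x θ)]
    exact hf1 x θ
  let B : (Fin n → 𝒳) → Set Θ := fun x => {θ | Real.exp c * PX x < ∏ i, P θ (x i)}
  have hB : ∀ x, w.real (B x) ≤ Real.exp (-c) := by
    intro x
    have hPX0 : 0 ≤ PX x := by rw [hPX]; exact integral_nonneg (hf0 x)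
    rcases hPX0.eq_or_lt with h | h
    · have h1 : (fun θ => ∏ i, P θ (x i)) =ᵐ[w] 0 := by
        rw [← integral_eq_zero_iff_of_nonneg (hf0 x) (hint x), ← hPX, ← h]
      have h2 : w (B x) = 0 := by
        rw [← nonpos_iff_eq_zero, ← (show w {θ | ¬ (∏ i, P θ (x i)) = 0} = 0 from h1)]
        refine measure_mono fun θ hθ => ?_
        have : Real.exp c * PX x < ∏ i, P θ (x i) := hθ
        rw [← h, mul_zero] at this
        exact this.ne'
      rw [Measure.real, h2]
      simpa using (Real.exp_pos _).le
    · have h1 := mul_meas_ge_le_integral_of_nonneg (μ := w)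
        (Filter.Eventually.of_forall (hf0 x)) (hint x) (Real.exp c * PX x)
      rw [← hPX] at h1
      have h2 : w.real (B x) ≤ w.real {θ | Real.exp c * PX x ≤ ∏ i, P θ (x i)} :=
        measureReal_mono fun θ hθ => Set.mem_ofPred.2 (le_of_lt (Set.mem_ofPred.1 hθ))
      refine h2.trans ?_
      rw [Real.exp_neg, ← one_div, le_div_iff₀ (Real.exp_pos c)]
      refine le_of_mul_le_mul_right ?_ h
      linarith
  let T : (Fin n → 𝒳) → (𝒳 → Fin (n + 1)) := fun x a =>
    ⟨(Finset.univ.filter fun i => x i = a).card,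
      Nat.lt_succ_of_le ((Finset.card_le_univ _).trans (by simp))⟩
  have hT : ∀ x y, T x = T y → ∀ θ, ∏ i, P θ (x i) = ∏ i, P θ (y i) := by
    have key : ∀ (x : Fin n → 𝒳) θ, ∏ i, P θ (x i) = ∏ a, P θ a ^ (T x a : ℕ) := by
      intro x θ
      rw [← Finset.prod_fiberwise Finset.univ x]
      refine Finset.prod_congr rfl fun a _ => ?_
      rw [Finset.prod_congr rfl (g := fun _ => P θ a), Finset.prod_const]
      intro i hi
      rw [(Finset.mem_filter.1 hi).2]
    intro x y h θ
    rw [key, key, h]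
  have hBT : ∀ x y, T x = T y → B x = B y := by
    intro x y h
    have h1 := hT x y h
    have h2 : PX x = PX y := by rw [hPX, hPX]; simp only [h1]
    ext θ
    simp only [B, Set.mem_ofPred_eq, h1, h2]
  let r : Set.range T → (Fin n → 𝒳) := fun t => t.2.choose
  have hr : ∀ t, T (r t) = t := fun t => t.2.choose_spec
  set G := {θ | ∀ x : Fin n → 𝒳, (∏ i, P θ (x i)) ≤ Real.exp c * PX x} with hG
  have hcov : (Set.univ : Set Θ) ⊆ G ∪ ⋃ t, B (r t) := by
    intro θ _
    by_cases h : θ ∈ G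
    · exact Or.inl h
    · right
      simp only [hG, Set.mem_ofPred_eq, not_forall, not_le] at h
      obtain ⟨x, hx⟩ := h
      refine Set.mem_iUnion.2 ⟨⟨T x, x, rfl⟩, ?_⟩
      rw [hBT _ x (hr ⟨T x, x, rfl⟩)]
      exact hx
  have h1 : (1 : ℝ) ≤ w.real G + ∑ t, w.real (B (r t)) := by
    calc (1 : ℝ) = w.real Set.univ := by simp
      _ ≤ w.real (G ∪ ⋃ t, B (r t)) := measureReal_mono hcov
      _ ≤ w.real G + w.real (⋃ t, B (r t)) := measureReal_union_le _ _
      _ ≤ _ := by gcongr; exact measureReal_iUnion_fintype_le _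
  have h2 : ∑ t, w.real (B (r t)) ≤ ((n : ℝ) + 1) ^ (Fintype.card 𝒳) * Real.exp (-c) := by
    refine (Finset.sum_le_sum fun t _ => hB (r t)).trans ?_
    rw [Finset.sum_const, nsmul_eq_mul]
    refine mul_le_mul_of_nonneg_right ?_ (Real.exp_pos _).le
    have : Fintype.card (Set.range T) ≤ (n + 1) ^ Fintype.card 𝒳 := by
      refine (Fintype.card_subtype_le _).trans ?_
      simp
    rw [Finset.card_univ]
    exact_mod_cast this
  change _ ≤ w.real G
  linarith
end

section
/- (Upper decomposition lemma.) Let 𝒳 be a finite alphabet, (Θ, w) a probability space, {P_θ} a measurable family of distributions on 𝒳, and P_{X^n}(x) = ∫_Θ ∏_{i=1}^n P_θ(x_i) dw(θ) the mixed memoryless source. Let X̄ = {X̄^n} be an arbitrary general source with P_{X̄^n}(x) > 0 for all x ∈ 𝒳^n. Let Θ*_n = { θ : ∏_{i=1}^n P_θ(x_i) ≤ e^{n^{1/4}} P_{X^n}(x) for every x ∈ 𝒳^n }. Then for every θ ∈ Θ*_n and every real number z_n: Pr{ (1/n) log( P_{X^n}(X_θ^n) / P_{X̄^n}(X_θ^n)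 ) ≤ z_n } ≤ Pr{ (1/n) log( P_{X_θ^n}(X_θ^n) / P_{X̄^n}(X_θ^n) ) ≤ z_n + n^{-3/4} }, where both probabilities are taken under the i.i.d. distribution P_{X_θ^n}(x) = ∏_{i=1}^n P_θ(x_i) on 𝒳^n. -/
open scoped BigOperators
open MeasureTheory

/-- Probability of a set `A` under a distribution `P` on a finite type. -/
noncomputable def prob {α : Type*} [Fintype α] (P : α → ℝ) (A : Set α) : ℝ :=
  ∑ x, A.indicator P x

/-- **Upper decomposition lemma:** for every `θ` in the expurgated set `Θ*_n` and
every real `z_n`,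
`Pr{(1/n) log (P_{X^n}(X_θ^n)/P_{X̄^n}(X_θ^n)) ≤ z_n}
  ≤ Pr{(1/n) log (P_{X_θ^n}(X_θ^n)/P_{X̄^n}(X_θ^n)) ≤ z_n + n^{-3/4}}`,
both probabilities being taken under the i.i.d. distribution `P_{X_θ^n}`. -/
theorem stmt_5 {𝒳 Θ : Type*} [Fintype 𝒳] [MeasurableSpace Θ]
    (w : Measure Θ) [IsProbabilityMeasure w]
    (P : Θ → 𝒳 → ℝ)
    (hmeas : ∀ x : 𝒳, Measurable fun θ => P θ x)
    (hdist : ∀ θ, (∀ x, 0 ≤ P θ x) ∧ (∑ x, P θ x) = 1)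
    (n : ℕ) (hn : 0 < n)
    (PX : (Fin n → 𝒳) → ℝ)
    (hPX : ∀ x : Fin n → 𝒳, PX x = ∫ θ, (∏ i, P θ (x i)) ∂w)
    (Pbar : (Fin n → 𝒳) → ℝ)
    (hPbar0 : ∀ x, 0 < Pbar x) (hPbar1 : ∑ x, Pbar x = 1)
    (θ : Θ)
    (hθ : ∀ x : Fin n → 𝒳,
      (∏ i, P θ (x i)) ≤ Real.exp ((n : ℝ) ^ ((1 : ℝ) / 4)) * PX x)
    (z : ℝ) :
    prob (fun x : Fin n → 𝒳 => ∏ i, P θ (x i))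
        {x | (1 / (n : ℝ)) * Real.log (PX x / Pbar x) ≤ z} ≤
      prob (fun x : Fin n → 𝒳 => ∏ i, P θ (x i))
        {x | (1 / (n : ℝ)) * Real.log ((∏ i, P θ (x i)) / Pbar x)
          ≤ z + ((n : ℝ) ^ ((3 : ℝ) / 4))⁻¹} := by
  unfold prob
  refine Finset.sum_le_sum fun x _ => ?_
  have hp0 : 0 ≤ ∏ i, P θ (x i) := Finset.prod_nonneg fun i _ => (hdist θ).1 (x i)
  rcases hp0.eq_or_lt with h0 | hpos
  · simp only [Set.indicator_apply, ← h0, ite_self, le_refl]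
  · suffices H : (1 / (n : ℝ)) * Real.log (PX x / Pbar x) ≤ z →
        (1 / (n : ℝ)) * Real.log ((∏ i, P θ (x i)) / Pbar x)
          ≤ z + ((n : ℝ) ^ ((3 : ℝ) / 4))⁻¹ by
      simp only [Set.indicator_apply, Set.mem_setOf_eq]
      by_cases h : (1 / (n : ℝ)) * Real.log (PX x / Pbar x) ≤ z
      · rw [if_pos h, if_pos (H h)]
      · rw [if_neg h]
        split_ifs
        · exact hp0
        · exact le_refl _
    intro hx
    have hn' : (0 : ℝ) < n := by exact_mod_cast hn
    have hPXpos : 0 < PX x :=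
      pos_of_mul_pos_right (hpos.trans_le (hθ x)) (Real.exp_pos _).le
    have hb := hPbar0 x
    have hlog : Real.log (∏ i, P θ (x i)) ≤ (n : ℝ) ^ ((1 : ℝ) / 4) + Real.log (PX x) := by
      have h := Real.log_le_log hpos (hθ x)
      rwa [Real.log_mul (Real.exp_pos _).ne' hPXpos.ne', Real.log_exp] at h
    rw [Real.log_div hPXpos.ne' hb.ne'] at hx
    rw [Real.log_div hpos.ne' hb.ne']
    have hpow : (1 / (n : ℝ)) * (n : ℝ) ^ ((1 : ℝ) / 4) = ((n : ℝ) ^ ((3 : ℝ) / 4))⁻¹ := by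
      rw [← Real.rpow_neg hn'.le, one_div, ← Real.rpow_neg_one, ← Real.rpow_add hn']
      norm_num
    rw [← hpow]
    have hinv : 0 ≤ 1 / (n : ℝ) := by positivity
    have := mul_le_mul_of_nonneg_left hlog hinv
    linarith
end

section
/- (Lower decomposition lemma.) Let 𝒳 be a finite alphabet, (Θ, w) a probability space, {P_θ} a measurable family of distributions on 𝒳, and P_{X^n}(x) = ∫_Θ ∏_{i=1}^n P_θ(x_i) dw(θ) the mixed memoryless source. Let X̄ = {X̄^n} be an arbitrary general source with P_{X̄^n}(x) > 0 for all x ∈ 𝒳^n. Then for every θ ∈ Θ, every real number z_n, and every γ > 0: Pr{ (1/n) log( P_{X^n}(X_θ^n) / P_{X̄^n}(X_θ^n) ) ≤ z_n } ≥ Pr{ (1/n) log( P_{X_θ^n}(X_θ^n) / P_{X̄^n}(X_θ^n) ) ≤ z_n − γ/√n } − e^{−√n γ}, where both probabilities are taken under the i.i.d. distribution P_{X_θ^n}(x) = ∏_{i=1}^n P_θ(x_i) on 𝒳^n. -/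
open scoped BigOperators
open MeasureTheory

/-- **Lower decomposition lemma:** for every `θ ∈ Θ`, real `z_n` and `γ > 0`,
`Pr{(1/n) log (P_{X^n}(X_θ^n)/P_{X̄^n}(X_θ^n)) ≤ z_n}
  ≥ Pr{(1/n) log (P_{X_θ^n}(X_θ^n)/P_{X̄^n}(X_θ^n)) ≤ z_n − γ/√n} − e^{−√n γ}`,
both probabilities being taken under the i.i.d. distribution `P_{X_θ^n}`. -/
theorem stmt_6 {𝒳 Θ : Type*} [Fintype 𝒳] [MeasurableSpace Θ]
    (w : Measure Θ) [IsProbabilityMeasure w]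
    (P : Θ → 𝒳 → ℝ)
    (hmeas : ∀ x : 𝒳, Measurable fun θ => P θ x)
    (hdist : ∀ θ, (∀ x, 0 ≤ P θ x) ∧ (∑ x, P θ x) = 1)
    (n : ℕ) (hn : 0 < n)
    (PX : (Fin n → 𝒳) → ℝ)
    (hPX : ∀ x : Fin n → 𝒳, PX x = ∫ θ, (∏ i, P θ (x i)) ∂w)
    (Pbar : (Fin n → 𝒳) → ℝ)
    (hPbar0 : ∀ x, 0 < Pbar x) (hPbar1 : ∑ x, Pbar x = 1)
    (θ : Θ) (z γ : ℝ) (hγ : 0 < γ) :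
    prob (fun x : Fin n → 𝒳 => ∏ i, P θ (x i))
        {x | (1 / (n : ℝ)) * Real.log (PX x / Pbar x) ≤ z} ≥
      prob (fun x : Fin n → 𝒳 => ∏ i, P θ (x i))
        {x | (1 / (n : ℝ)) * Real.log ((∏ i, P θ (x i)) / Pbar x)
          ≤ z - γ / Real.sqrt (n : ℝ)} - Real.exp (-(Real.sqrt (n : ℝ) * γ)) := by
  classical
  have hnR : (0 : ℝ) < n := by exact_mod_cast hn
  have hsq : (0 : ℝ) < Real.sqrt n := Real.sqrt_pos.mpr hnR
  have hss : Real.sqrt n * Real.sqrt n = n := Real.mul_self_sqrt hnR.le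
  have hprod0 : ∀ t (x : Fin n → 𝒳), 0 ≤ ∏ i, P t (x i) := fun t x =>
    Finset.prod_nonneg fun i _ => (hdist t).1 _
  have hle1 : ∀ t a, P t a ≤ 1 := fun t a => by
    rw [← (hdist t).2]
    exact Finset.single_le_sum (f := P t) (fun b _ => (hdist t).1 b) (Finset.mem_univ a)
  have hprod1 : ∀ t (x : Fin n → 𝒳), ∏ i, P t (x i) ≤ 1 := fun t x =>
    Finset.prod_le_one (fun i _ => (hdist t).1 _) (fun i _ => hle1 t _)
  have hint : ∀ x : Fin n → 𝒳, Integrable (fun t => ∏ i, P t (x i)) w := fun x => by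
    refine Integrable.of_bound (C := 1) ?_ ?_
    · exact (Finset.measurable_prod _ fun i _ => hmeas (x i)).aestronglyMeasurable
    · refine Filter.Eventually.of_forall fun t => ?_
      rw [Real.norm_eq_abs, abs_of_nonneg (hprod0 t x)]
      exact hprod1 t x
  have hPX0 : ∀ x, 0 ≤ PX x := fun x => by
    rw [hPX]; exact integral_nonneg fun t => hprod0 t x
  have hPX1 : ∑ x, PX x = 1 := by
    simp_rw [hPX]
    rw [← integral_finsetSum _ fun x _ => hint x]
    have : ∀ t, ∑ x : Fin n → 𝒳, ∏ i, P t (x i) = 1 := fun t => by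
      rw [← Fintype.sum_pow, (hdist t).2, one_pow]
    simp [this]
  -- key pointwise consequence
  have key : ∀ x : Fin n → 𝒳, (1 / (n : ℝ)) * Real.log ((∏ i, P θ (x i)) / Pbar x)
          ≤ z - γ / Real.sqrt (n : ℝ) →
      ∏ i, P θ (x i) ≤ Pbar x * Real.exp (n * z) * Real.exp (-(Real.sqrt (n : ℝ) * γ)) := by
    intro x hx
    have hb := hPbar0 x
    rcases (hprod0 θ x).eq_or_lt with h0 | h0
    · rw [← h0]; positivity
    · have h1 : Real.log ((∏ i, P θ (x i)) / Pbar x) ≤ n * z + -(Real.sqrt n * γ) := by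
        have h2 := mul_le_mul_of_nonneg_left hx hnR.le
        have h3 : (n : ℝ) * (γ / Real.sqrt n) = Real.sqrt n * γ := by
          rw [mul_div_assoc', div_eq_iff hsq.ne']
          linear_combination (-γ) * hss
        have h4 : (n : ℝ) * (1 / n * Real.log ((∏ i, P θ (x i)) / Pbar x))
          = Real.log ((∏ i, P θ (x i)) / Pbar x) := by field_simp
        rw [h4, mul_sub, h3] at h2
        linarith
      rw [Real.log_le_iff_le_exp (div_pos h0 hb), Real.exp_add, div_le_iff₀ hb] at h1
      linarith
  obtain ⟨Q, hQ0, hQ1, hQ⟩ : ∃ Q : (Fin n → 𝒳) → ℝ, (∀ x, 0 ≤ Q x) ∧ ∑ x, Q x = 1 ∧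
      ∀ x, ¬ ((1 / (n : ℝ)) * Real.log (PX x / Pbar x) ≤ z) →
        Pbar x * Real.exp (n * z) ≤ Q x := by
    rcases lt_or_ge z 0 with hz | hz
    · refine ⟨Pbar, fun x => (hPbar0 x).le, hPbar1, fun x _ => ?_⟩
      have : Real.exp (n * z) ≤ 1 := Real.exp_le_one_iff.mpr (by nlinarith)
      exact mul_le_of_le_one_right (hPbar0 x).le this
    · refine ⟨PX, hPX0, hPX1, fun x hx => ?_⟩
      have hb := hPbar0 x
      rcases (hPX0 x).eq_or_lt with h0 | h0
      · exact absurd (by rw [← h0]; simpa using hz) hx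
      · push Not at hx
        have h2 := mul_lt_mul_of_pos_left hx hnR
        have h4 : (n : ℝ) * (1 / n * Real.log (PX x / Pbar x))
          = Real.log (PX x / Pbar x) := by field_simp
        rw [h4, Real.lt_log_iff_exp_lt (div_pos h0 hb), lt_div_iff₀ hb] at h2
        linarith
  rw [ge_iff_le, sub_le_iff_le_add]
  have hE : Real.exp (-(Real.sqrt (n : ℝ) * γ))
      = ∑ x, Q x * Real.exp (-(Real.sqrt (n : ℝ) * γ)) := by
    rw [← Finset.sum_mul, hQ1, one_mul]
  rw [hE]
  unfold prob
  rw [← Finset.sum_add_distrib]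
  refine Finset.sum_le_sum fun x _ => ?_
  have hq := mul_nonneg (hQ0 x) (Real.exp_pos (-(Real.sqrt (n : ℝ) * γ))).le
  have hp := hprod0 θ x
  simp only [Set.indicator_apply, Set.mem_setOf_eq]
  by_cases hA : (1 / (n : ℝ)) * Real.log (PX x / Pbar x) ≤ z
  · rw [if_pos hA]
    split_ifs <;> linarith
  · rw [if_neg hA, zero_add]
    split_ifs with hB
    · exact (key x hB).trans (mul_le_mul_of_nonneg_right (hQ x hA) (Real.exp_pos _).le)
    · exact hq
end

section
/- Let 𝒳 be a finite alphabet, (Θ, w) a probability space, {P_θ} a measurable family of distributions on 𝒳, P_{X^n}(x) = ∫_Θ ∏_{i=1}^n P_θ(x_i) dw(θ) the mixed memoryless source, and P_{X̄^n}(x) = ∏_{i=1}^n P_{X̄}(x_i) a stationary memoryless alternative with P_{X̄}(x) > 0 for all x. For θ ∈ Θ set D_θ = D(P_θ‖P_{X̄}) and V_θ = Σ_x P_θ(x)( log(P_θ(x)/P_{X̄}(x)) − D_θ )², assume V_θ > 0 for all θ, and let Φ_θ(S) = G(S/√V_θ) with G the standard normal CDF. Then for all R, S ∈ ℝ: limsup_{n→∞}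 Pr{ (1/n) log( P_{X^n}(X^n)/P_{X̄^n}(X^n) ) ≤ R + S/√n } ≤ w({θ : D_θ < R}) + ∫_{{θ : D_θ = R}} Φ_θ(S) dw(θ), where the probability on the left is taken under P_{X^n}. -/
open scoped BigOperators
open MeasureTheory

/-- Kullback–Leibler divergence `D(P‖Q) = ∑_x P(x) log (P(x)/Q(x))` on a finite alphabet. -/
noncomputable def KL {𝒳 : Type*} [Fintype 𝒳] (P Q : 𝒳 → ℝ) : ℝ :=
  ∑ x, P x * Real.log (P x / Q x)

/-- The variance of the divergence density,
`V(P,Q) = ∑_x P(x) (log (P(x)/Q(x)) − D(P‖Q))²`. -/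
noncomputable def Vdiv {𝒳 : Type*} [Fintype 𝒳] (P Q : 𝒳 → ℝ) : ℝ :=
  ∑ x, P x * (Real.log (P x / Q x) - KL P Q) ^ 2

/-- The standard normal cumulative distribution function
`G(x) = (1/√(2π)) ∫_{-∞}^x e^{-u²/2} du`. -/
noncomputable def stdGauss (x : ℝ) : ℝ :=
  ∫ u in Set.Iic x, Real.exp (-u ^ 2 / 2) / Real.sqrt (2 * Real.pi)

open ProbabilityTheory Filter Topology

lemma stdGauss_eq (t : ℝ) : stdGauss t = (gaussianReal 0 1).real (Set.Iic t) := by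
  rw [Measure.real, gaussianReal_apply_eq_integral _ one_ne_zero, ENNReal.toReal_ofReal]
  · unfold stdGauss
    refine integral_congr_ae (ae_of_all _ fun u => ?_)
    simp [gaussianPDFReal]
    ring
  · exact integral_nonneg fun x => gaussianPDFReal_nonneg _ _ _

lemma prob_eq {𝒳 : Type*} [Fintype 𝒳] [MeasurableSpace 𝒳] [MeasurableSingletonClass 𝒳]
    (μ : Measure 𝒳) [IsProbabilityMeasure μ] (n : ℕ) (A : Set (Fin n → 𝒳)) :
    prob (fun x : Fin n → 𝒳 => ∏ i, μ.real {x i}) A =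
      (Measure.infinitePi (fun _ : ℕ => μ)).real {ω | (fun i : Fin n => ω i) ∈ A} := by
  classical
  have hm : Measurable (fun (ω : ℕ → 𝒳) (i : Fin n) => ω i) := by fun_prop
  have hmap : (Measure.infinitePi (fun _ : ℕ => μ)).map (fun (ω : ℕ → 𝒳) (i : Fin n) => ω i)
      = Measure.pi (fun _ : Fin n => μ) := by
    refine (Measure.pi_eq fun s hs => ?_).symm
    rw [Measure.map_apply hm (.univ_pi hs)]
    let t : ℕ → Set 𝒳 := fun k => if h : k < n then s ⟨k, h⟩ else Set.univ
    have : (fun (ω : ℕ → 𝒳) (i : Fin n) => ω i) ⁻¹' Set.univ.pi s =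
        Set.pi (Finset.range n : Set ℕ) t := by
      ext ω
      simp only [Set.mem_preimage, Set.mem_pi, Set.mem_univ, true_imp_iff, Finset.coe_range,
        Set.mem_Iio, t]
      constructor
      · intro h k hk
        simpa [hk] using h ⟨k, hk⟩
      · intro h i
        simpa using h i i.2
    rw [this, Measure.infinitePi_pi]
    · rw [Finset.prod_range]
      simp [t]
    · intro k hk
      have : k < n := by simpa using hk
      simp only [t, this, dif_pos]
      exact hs _
  have hA : MeasurableSet A := A.toFinite.measurableSet
  have : (Measure.infinitePi (fun _ : ℕ => μ)).real {ω | (fun i : Fin n => ω i) ∈ A}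
     = (Measure.pi (fun _ : Fin n => μ)).real A := by
    rw [← hmap, map_measureReal_apply hm hA]; rfl
  rw [this]
  have h2 : A = ↑(Finset.univ.filter (· ∈ A)) := by ext; simp
  conv_rhs => rw [h2, ← sum_measureReal_singleton]
  unfold prob
  rw [Finset.sum_filter]
  refine Finset.sum_congr rfl fun x _ => ?_
  rw [Set.indicator_apply]
  congr 1
  simp [Measure.real, Measure.pi_singleton, ENNReal.toReal_prod]

lemma clt {𝒳 : Type*} [Fintype 𝒳] (p f : 𝒳 → ℝ) (hp : ∀ x, 0 ≤ p x) (hp1 : ∑ x, p x = 1)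
    (hf0 : ∑ x, p x * f x = 0) (hf1 : ∑ x, p x * f x ^ 2 = 1) (t : ℕ → ℝ) (t0 : ℝ)
    (ht : Tendsto t atTop (𝓝 t0)) :
    Tendsto (fun n : ℕ => prob (fun x : Fin n → 𝒳 => ∏ i, p (x i))
      {x | (√(n : ℝ))⁻¹ * ∑ i, f (x i) ≤ t n}) atTop (𝓝 (stdGauss t0)) := by
  classical
  let _ : MeasurableSpace 𝒳 := ⊤
  let μ : Measure 𝒳 := ∑ x, ENNReal.ofReal (p x) • Measure.dirac x
  have hμ : ∀ x, μ.real {x} = p x := by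
    intro x
    simp only [μ, Measure.real, Measure.finsetSum_apply, Measure.smul_apply, smul_eq_mul,
      Measure.dirac_apply]
    rw [Finset.sum_eq_single x]
    · simp [hp]
    · intro b _ hb; simp [hb]
    · simp
  have : IsProbabilityMeasure μ := by
    constructor
    simp only [μ, Measure.finsetSum_apply, Measure.smul_apply, smul_eq_mul, measure_univ, mul_one]
    rw [← ENNReal.ofReal_sum_of_nonneg (fun x _ => hp x), hp1, ENNReal.ofReal_one]
  have hfm : Measurable f := fun _ _ => trivial
  let M := Measure.infinitePi (fun _ : ℕ => μ)
  let X : ℕ → (ℕ → 𝒳) → ℝ := fun k ω => f (ω k)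
  have hint : ∀ g : 𝒳 → ℝ, ∫ ω, g (ω 0) ∂M = ∑ x, p x * g x := by
    intro g
    have h := (measurePreserving_eval_infinitePi (fun _ : ℕ => μ) 0)
    have h2 := integral_map (μ := M) (φ := Function.eval 0) (f := g) h.measurable.aemeasurable
      (Measurable.aestronglyMeasurable (fun _ _ => trivial))
    rw [h.map_eq] at h2
    rw [show ∫ ω, g (ω 0) ∂M = ∫ ω, g (Function.eval 0 ω) ∂M from rfl, ← h2,
      integral_fintype (by simp)]
    simp [hμ]
  have hind : iIndepFun X M :=
    iIndepFun_infinitePi (P := fun _ : ℕ => μ) (X := fun _ => f) (fun _ => hfm)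
  have hid : ∀ i, IdentDistrib (X i) (X 0) M M := by
    intro i
    have h : IdentDistrib (fun ω : ℕ → 𝒳 => ω i) (fun ω : ℕ → 𝒳 => ω 0) M M :=
      ⟨(measurable_pi_apply i).aemeasurable, (measurable_pi_apply 0).aemeasurable, by
        rw [Measure.infinitePi_map_eval, Measure.infinitePi_map_eval]⟩
    exact h.comp hfm
  have hY : HasLaw (id : ℝ → ℝ) (gaussianReal 0 1) (gaussianReal 0 1) := ⟨by fun_prop, by simp⟩
  have h := tendstoInDistribution_inv_sqrt_mul_sum hY (P := M) (X := X)
    (by rw [← hf0]; exact hint f) (by rw [← hf1]; exact hint (fun x => f x ^ 2)) hind hid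
  have h2 := h.add_of_tendstoInMeasure_const (Y := fun n _ => - t n) (c := -t0)
    (by
      apply tendstoInMeasure_of_tendsto_ae
      · intro n; fun_prop
      · exact ae_of_all _ fun _ => ht.neg) (by intro i; fun_prop)
  have h3 := h2.tendsto
  have hset : (fun ω : ℝ => id ω + -t0) ⁻¹' Set.Iic 0 = Set.Iic t0 := by
    ext x; simp
  have h4 : Tendsto (fun n : ℕ => Measure.map
        ((fun ω => (√(n : ℝ))⁻¹ * ∑ k ∈ Finset.range n, X k ω) + fun _ => -t n) M (Set.Iic 0))
      atTop (𝓝 (Measure.map (fun ω => id ω + -t0) (gaussianReal 0 1) (Set.Iic 0))) :=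
    ProbabilityMeasure.tendsto_measure_of_null_frontier_of_tendsto' h3 (E := Set.Iic 0)
    (by
      rw [frontier_Iic]
      change Measure.map (fun ω => id ω + -t0) (gaussianReal 0 1) {0} = 0
      rw [Measure.map_apply (by fun_prop) (by simp)]
      have hpre : (fun ω : ℝ => id ω + -t0) ⁻¹' {0} = {t0} := by
        ext x; simp [← sub_eq_add_neg, sub_eq_zero]
      have := nullSingletonClass_gaussianReal (μ := 0) (v := 1) one_ne_zero
      rw [hpre, measure_singleton])
  rw [Measure.map_apply (by fun_prop) measurableSet_Iic, hset] at h4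
  have h5 := (ENNReal.tendsto_toReal (measure_ne_top _ _)).comp h4
  rw [stdGauss_eq]
  refine h5.congr fun n => ?_
  simp only [Function.comp]
  rw [Measure.map_apply_of_aemeasurable (h2.forall_aemeasurable n) measurableSet_Iic]
  simp_rw [← hμ]
  rw [prob_eq]
  simp only [Measure.real]
  congr 2
  ext ω
  simp [X, Finset.sum_range, ← sub_eq_add_neg]

lemma prob_mono {α : Type*} [Fintype α] {P : α → ℝ} (hP : ∀ x, 0 ≤ P x) {A B : Set α}
    (h : ∀ x, 0 < P x → x ∈ A → x ∈ B) : prob P A ≤ prob P B := by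
  classical
  refine Finset.sum_le_sum fun x _ => ?_
  rw [Set.indicator_apply, Set.indicator_apply]
  rcases (hP x).eq_or_lt with h0 | h0
  · simp [← h0]
  · split_ifs with h1 h2
    · exact le_rfl
    · exact absurd (h x h0 h1) h2
    · exact hP x
    · exact le_rfl

lemma prob_nonneg {α : Type*} [Fintype α] {P : α → ℝ} (hP : ∀ x, 0 ≤ P x) (A : Set α) :
    0 ≤ prob P A :=
  Finset.sum_nonneg fun x _ => Set.indicator_nonneg (fun x _ => hP x) x

lemma prob_prod_le_one {𝒳 : Type*} [Fintype 𝒳] {p : 𝒳 → ℝ} (hp : ∀ x, 0 ≤ p x)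
    (hp1 : ∑ x, p x = 1) (n : ℕ) (A : Set (Fin n → 𝒳)) :
    prob (fun x : Fin n → 𝒳 => ∏ i, p (x i)) A ≤ 1 := by
  classical
  refine (prob_mono (B := Set.univ) (fun x => Finset.prod_nonneg fun i _ => hp _)
    (fun _ _ _ => trivial)).trans ?_
  simp only [prob, Set.indicator_univ]
  have := Finset.prod_univ_sum (fun _ : Fin n => (Finset.univ : Finset 𝒳)) (fun _ a => p a)
  rw [Fintype.piFinset_univ] at this
  rw [← this]
  simp [hp1]

/-- The threshold. -/
noncomputable def thr (R S : ℝ) (n : ℕ) : ℝ := n * R + S * √(n : ℝ) + √(√(n : ℝ))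

/-- The single-component probability. -/
noncomputable def FF {𝒳 : Type*} [Fintype 𝒳] (p Q : 𝒳 → ℝ) (R S : ℝ) (n : ℕ) : ℝ :=
  prob (fun x : Fin n → 𝒳 => ∏ i, p (x i)) {x | ∑ i, Real.log (p (x i) / Q (x i)) ≤ thr R S n}

lemma stdGauss_atBot : Tendsto stdGauss atBot (𝓝 0) := by
  have : stdGauss = fun t => cdf (gaussianReal 0 1) t := by
    ext t; rw [stdGauss_eq, cdf_eq_real]
  rw [this]
  exact tendsto_cdf_atBot _

lemma FF_lim {𝒳 : Type*} [Fintype 𝒳] {p Q : 𝒳 → ℝ} (hp : ∀ x, 0 ≤ p x)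
    (hp1 : ∑ x, p x = 1) (hV : 0 < Vdiv p Q) (R S : ℝ) (hD : R ≤ KL p Q) :
    Tendsto (FF p Q R S) atTop
      (𝓝 (if KL p Q = R then stdGauss (S / √(Vdiv p Q)) else 0)) := by
  set D := KL p Q with hDdef
  set V := Vdiv p Q with hVdef
  have hs : 0 < √V := Real.sqrt_pos.2 hV
  let f : 𝒳 → ℝ := fun x => (Real.log (p x / Q x) - D) / √V
  have hf0 : ∑ x, p x * f x = 0 := by
    have : ∀ x, p x * f x = (p x * Real.log (p x / Q x) - p x * D) / √V := by
      intro x; simp only [f]; ring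
    simp_rw [this]
    rw [← Finset.sum_div, Finset.sum_sub_distrib, ← Finset.sum_mul, hp1]
    simp [hDdef, KL]
  have hf1 : ∑ x, p x * f x ^ 2 = 1 := by
    have : ∀ x, p x * f x ^ 2 = (p x * (Real.log (p x / Q x) - D) ^ 2) / V := by
      intro x; simp only [f, div_pow, Real.sq_sqrt hV.le]; ring
    simp_rw [this]
    rw [← Finset.sum_div]
    exact div_self hV.ne'
  let t : ℕ → ℝ := fun n => (√(n : ℝ) * (R - D) + S + (√√(n : ℝ))⁻¹) / √V
  have hinv : Tendsto (fun n : ℕ => (√√(n : ℝ))⁻¹) atTop (𝓝 0) :=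
    tendsto_inv_atTop_zero.comp
      (Real.tendsto_sqrt_atTop.comp (Real.tendsto_sqrt_atTop.comp tendsto_natCast_atTop_atTop))
  have hev : ∀ᶠ n : ℕ in atTop, FF p Q R S n = prob (fun x : Fin n → 𝒳 => ∏ i, p (x i))
      {x | (√(n : ℝ))⁻¹ * ∑ i, f (x i) ≤ t n} := by
    filter_upwards [eventually_ge_atTop 1] with n hn
    unfold FF
    congr 1
    ext x
    have hn' : (0 : ℝ) < n := by exact_mod_cast hn
    have h1 : 0 < √(n : ℝ) := Real.sqrt_pos.2 hn'
    have h2 : 0 < √√(n : ℝ) := Real.sqrt_pos.2 h1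
    simp only [Set.mem_ofPred_eq, f, t, thr]
    rw [← Finset.sum_div, Finset.sum_sub_distrib, ← mul_div_assoc,
      div_le_div_iff_of_pos_right hs, inv_mul_le_iff₀ h1]
    simp only [Finset.sum_const, Finset.card_univ, Fintype.card_fin, nsmul_eq_mul]
    have e1 : √(n : ℝ) * √(n : ℝ) = n := Real.mul_self_sqrt hn'.le
    have e2 : √(n : ℝ) * (√√(n : ℝ))⁻¹ = √√(n : ℝ) := by
      rw [← div_eq_mul_inv, div_eq_iff h2.ne', Real.mul_self_sqrt h1.le]
    have : √(n : ℝ) * (√(n : ℝ) * (R - D) + S + (√√(n : ℝ))⁻¹) =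
        n * R - n * D + S * √(n : ℝ) + √√(n : ℝ) := by
      rw [mul_add, mul_add, e2, ← mul_assoc, e1]; ring
    rw [this]
    constructor <;> intro h <;> linarith
  have hprod : ∀ n (x : Fin n → 𝒳), 0 ≤ ∏ i, p (x i) :=
    fun n x => Finset.prod_nonneg fun i _ => hp _
  refine Tendsto.congr' (hev.mono fun _ h => h.symm) ?_
  split_ifs with h
  · apply clt p f hp hp1 hf0 hf1
    simp only [t, h, sub_self, mul_zero, zero_add]
    simpa using (hinv.const_add S).div_const (√V)
  · have hlt : R - D < 0 := by
      rcases hD.lt_or_eq with h' | h'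
      · linarith
      · exact absurd h'.symm h
    have ht : Tendsto t atTop atBot := by
      refine Tendsto.atBot_div_const hs ?_
      refine Tendsto.atBot_add ?_ hinv
      refine Tendsto.atBot_add ?_ tendsto_const_nhds
      exact (Real.tendsto_sqrt_atTop.comp tendsto_natCast_atTop_atTop).atTop_mul_const_of_neg hlt
    rw [tendsto_order]
    refine ⟨fun a ha => Eventually.of_forall fun n => ha.trans_le (prob_nonneg (hprod n) _),
      fun a ha => ?_⟩
    obtain ⟨M, hM⟩ := (stdGauss_atBot.eventually_lt_const ha).exists
    have := clt p f hp hp1 hf0 hf1 (fun _ => M) M tendsto_const_nhds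
    filter_upwards [this.eventually_lt_const hM, ht.eventually_le_atBot M] with n h1 h2
    refine lt_of_le_of_lt (prob_mono (hprod n) fun x _ hx => ?_) h1
    exact le_trans hx h2

lemma tail_lim (K : ℕ) :
    Tendsto (fun n : ℕ => ((n : ℝ) + 1) ^ K * Real.exp (-√√(n : ℝ))) atTop (𝓝 0) := by
  have h0 : Tendsto (fun n : ℕ => √√(n : ℝ)) atTop atTop :=
      (Real.tendsto_sqrt_atTop.comp (Real.tendsto_sqrt_atTop.comp tendsto_natCast_atTop_atTop))
  have h1 := ((Real.tendsto_pow_mul_exp_neg_atTop_nhds_zero (4 * K)).comp h0).const_mul (2 ^ K)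
  rw [mul_zero] at h1
  refine squeeze_zero' (Eventually.of_forall fun n => by positivity) ?_ h1
  filter_upwards [eventually_ge_atTop 1] with n hn
  have hn' : (1 : ℝ) ≤ n := by exact_mod_cast hn
  simp only [Function.comp]
  rw [← mul_assoc]
  gcongr
  have : √√(n : ℝ) ^ (4 * K) = (n : ℝ) ^ K := by
    rw [pow_mul]
    congr 1
    rw [show 4 = 2 * 2 from rfl, pow_mul, Real.sq_sqrt (by positivity), Real.sq_sqrt (by positivity)]
  rw [this, ← mul_pow]
  gcongr
  linarith

/-- The bad set. -/
def Bad {𝒳 Θ : Type*} [Fintype 𝒳] [MeasurableSpace Θ] (w : Measure Θ) (P : Θ → 𝒳 → ℝ)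
    (n : ℕ) : Set Θ :=
  ⋃ k : 𝒳 → Fin (n + 1), {θ | Real.exp (√√(n : ℝ)) * ∫ θ', ∏ a, P θ' a ^ (k a : ℕ) ∂w
    < ∏ a, P θ a ^ (k a : ℕ)}


lemma bad_meas {𝒳 Θ : Type*} [Fintype 𝒳] [MeasurableSpace Θ] (w : Measure Θ)
    (P : Θ → 𝒳 → ℝ) (hmeas : ∀ x : 𝒳, Measurable fun θ => P θ x) (n : ℕ) :
    MeasurableSet (Bad w P n) := by
  refine MeasurableSet.iUnion fun k => ?_
  refine measurableSet_lt measurable_const ?_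
  exact Finset.measurable_prod _ fun a _ => (hmeas a).pow_const _

lemma markov_bd {Θ : Type*} [MeasurableSpace Θ] (w : Measure Θ) [IsProbabilityMeasure w]
    (g : Θ → ℝ) (hg0 : ∀ θ, 0 ≤ g θ) (hi : Integrable g w)
    (T : ℝ) : w.real {θ | Real.exp T * ∫ θ', g θ' ∂w < g θ} ≤ Real.exp (-T) := by
  rcases (integral_nonneg hg0 : 0 ≤ ∫ θ', g θ' ∂w).eq_or_lt with h | h
  · have h2 := (integral_eq_zero_iff_of_nonneg hg0 hi).1 h.symm
    have : w {θ | Real.exp T * ∫ θ', g θ' ∂w < g θ} = 0 := by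
      rw [← h]
      refine measure_mono_null (t := {θ | ¬ (g θ = 0)}) ?_ h2
      intro θ hθ h0
      simp [h0] at hθ
    rw [Measure.real, this]
    simpa using (Real.exp_pos _).le
  · have hm := mul_meas_ge_le_integral_of_nonneg (ae_of_all _ hg0) hi
      (Real.exp T * ∫ θ', g θ' ∂w)
    have h3 : w.real {θ | Real.exp T * ∫ θ', g θ' ∂w < g θ} ≤
        w.real {θ | Real.exp T * ∫ θ', g θ' ∂w ≤ g θ} :=
      measureReal_mono fun θ hθ => by
        simp only [Set.mem_ofPred_eq] at hθ ⊢; exact hθ.le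
    refine h3.trans ?_
    rw [Real.exp_neg, ← one_div, le_div_iff₀ (Real.exp_pos T)]
    refine le_of_mul_le_mul_right ?_ h
    calc _ = Real.exp T * (∫ θ', g θ' ∂w) *
        w.real {θ | Real.exp T * ∫ θ', g θ' ∂w ≤ g θ} := by ring
      _ ≤ _ := hm
      _ = _ := by ring

lemma p_le_one {𝒳 : Type*} [Fintype 𝒳] {p : 𝒳 → ℝ} (hp : ∀ x, 0 ≤ p x)
    (hp1 : ∑ x, p x = 1) (x : 𝒳) : p x ≤ 1 := by
  rw [← hp1]; exact Finset.single_le_sum (fun i _ => hp i) (Finset.mem_univ x)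

lemma bdd_int {Θ : Type*} [MeasurableSpace Θ] (w : Measure Θ) [IsProbabilityMeasure w]
    (g : Θ → ℝ) (hg : Measurable g) (h0 : ∀ θ, 0 ≤ g θ) (h1 : ∀ θ, g θ ≤ 1) :
    Integrable g w :=
  Integrable.of_bound hg.aestronglyMeasurable 1
    (ae_of_all _ fun θ => by rw [Real.norm_eq_abs, abs_of_nonneg (h0 θ)]; exact h1 θ)

lemma bad_le {𝒳 Θ : Type*} [Fintype 𝒳] [MeasurableSpace Θ] (w : Measure Θ)
    [IsProbabilityMeasure w]
    (P : Θ → 𝒳 → ℝ) (hmeas : ∀ x : 𝒳, Measurable fun θ => P θ x)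
    (hdist : ∀ θ, (∀ x, 0 ≤ P θ x) ∧ (∑ x, P θ x) = 1) (n : ℕ) :
    w.real (Bad w P n) ≤ ((n : ℝ) + 1) ^ Fintype.card 𝒳 * Real.exp (-√√(n : ℝ)) := by
  classical
  unfold Bad
  refine (measureReal_iUnion_fintype_le _).trans ?_
  refine (Finset.sum_le_card_nsmul _ _ (Real.exp (-√√(n : ℝ))) fun k _ => ?_).trans ?_
  · have h0 : ∀ θ, 0 ≤ ∏ a, P θ a ^ (k a : ℕ) :=
      fun θ => Finset.prod_nonneg fun a _ => pow_nonneg ((hdist θ).1 a) _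
    refine markov_bd w _ h0 (bdd_int w _ ?_ h0 ?_) _
    · exact Finset.measurable_prod _ fun a _ => (hmeas a).pow_const _
    · intro θ
      exact Finset.prod_le_one (fun a _ => pow_nonneg ((hdist θ).1 a) _)
        fun a _ => pow_le_one₀ ((hdist θ).1 a) (p_le_one (hdist θ).1 (hdist θ).2 a)
  · simp

lemma good_le {𝒳 Θ : Type*} [Fintype 𝒳] [MeasurableSpace Θ] (w : Measure Θ)
    (P : Θ → 𝒳 → ℝ) (n : ℕ) (θ : Θ) (hθ : θ ∉ Bad w P n) (x : Fin n → 𝒳) :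
    ∏ i, P θ (x i) ≤ Real.exp (√√(n : ℝ)) * ∫ θ', ∏ i, P θ' (x i) ∂w := by
  classical
  have hk : ∀ a, (Finset.univ.filter (fun i => x i = a)).card < n + 1 := by
    intro a
    have := Finset.card_le_univ (Finset.univ.filter (fun i => x i = a))
    simp only [Fintype.card_fin] at this
    omega
  let k : 𝒳 → Fin (n + 1) := fun a => ⟨_, hk a⟩
  have he : ∀ θ, ∏ i, P θ (x i) = ∏ a, P θ a ^ (k a : ℕ) := by
    intro θ
    rw [← Finset.prod_fiberwise_of_maps_to (s := Finset.univ) (t := Finset.univ) (g := x)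
      (fun _ _ => Finset.mem_univ _)]
    refine Finset.prod_congr rfl fun a _ => ?_
    rw [Finset.prod_congr rfl (g := fun _ => P θ a)]
    · simp [k]
    · intro i hi
      rw [(Finset.mem_filter.1 hi).2]
  simp_rw [he]
  by_contra h
  exact hθ (Set.mem_iUnion.2 ⟨k, not_le.1 h⟩)

lemma KL_meas {𝒳 Θ : Type*} [Fintype 𝒳] [MeasurableSpace Θ]
    (P : Θ → 𝒳 → ℝ) (hmeas : ∀ x : 𝒳, Measurable fun θ => P θ x) (Q : 𝒳 → ℝ) :
    Measurable fun θ => KL (P θ) Q := by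
  unfold KL
  exact Finset.measurable_sum _ fun x _ =>
    (hmeas x).mul (Real.measurable_log.comp ((hmeas x).div_const _))

lemma FF_meas {𝒳 Θ : Type*} [Fintype 𝒳] [MeasurableSpace Θ]
    (P : Θ → 𝒳 → ℝ) (hmeas : ∀ x : 𝒳, Measurable fun θ => P θ x) (Q : 𝒳 → ℝ) (R S : ℝ) (n : ℕ) :
    Measurable fun θ => FF (P θ) Q R S n := by
  classical
  unfold FF prob
  refine Finset.measurable_sum _ fun x _ => ?_
  simp only [Set.indicator_apply, Set.mem_ofPred_eq]
  refine Measurable.ite (measurableSet_le ?_ measurable_const) ?_ measurable_const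
  · exact Finset.measurable_sum _ fun i _ =>
      Real.measurable_log.comp ((hmeas _).div_const _)
  · exact Finset.measurable_prod _ fun i _ => hmeas _

lemma comp_le {𝒳 Θ : Type*} [Fintype 𝒳] [MeasurableSpace Θ] (w : Measure Θ)
    (P : Θ → 𝒳 → ℝ) (hdist : ∀ θ, (∀ x, 0 ≤ P θ x) ∧ (∑ x, P θ x) = 1)
    (Q : 𝒳 → ℝ) (hQ0 : ∀ x, 0 < Q x) (R S : ℝ) (n : ℕ) (hn : 1 ≤ n) (θ : Θ)
    (hθ : θ ∉ Bad w P n) :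
    prob (fun x : Fin n → 𝒳 => ∏ i, P θ (x i))
        {x | (1 / (n : ℝ)) * Real.log
          ((∫ θ, (∏ i, P θ (x i)) ∂w) / ∏ i, Q (x i)) ≤ R + S / Real.sqrt (n : ℝ)}
      ≤ FF (P θ) Q R S n := by
  refine prob_mono (fun x => Finset.prod_nonneg fun i _ => (hdist θ).1 _) fun x hx hA => ?_
  have hg := good_le w P n θ hθ x
  set m := ∫ θ', ∏ i, P θ' (x i) ∂w with hm
  have hm0 : 0 < m := by
    by_contra h
    have := mul_nonpos_of_nonneg_of_nonpos (Real.exp_pos (√√(n : ℝ))).le (not_lt.1 h)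
    linarith
  have hq : 0 < ∏ i, Q (x i) := Finset.prod_pos fun i _ => hQ0 _
  have hpi : ∀ i, P θ (x i) ≠ 0 := fun i h =>
    hx.ne' (Finset.prod_eq_zero (Finset.mem_univ i) h)
  simp only [Set.mem_ofPred_eq] at hA ⊢
  rw [← hm] at hA
  have hn' : (0 : ℝ) < n := by exact_mod_cast hn
  have h1 : 0 < √(n : ℝ) := Real.sqrt_pos.2 hn'
  rw [one_div, inv_mul_le_iff₀ hn'] at hA
  have e1 : (n : ℝ) * (R + S / √(n : ℝ)) = n * R + S * √(n : ℝ) := by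
    have : (n : ℝ) * (S / √(n : ℝ)) = S * √(n : ℝ) := by
      rw [mul_div_assoc', div_eq_iff h1.ne', mul_assoc, Real.mul_self_sqrt hn'.le, mul_comm]
    rw [mul_add, this]
  rw [e1] at hA
  rw [← Real.log_prod (fun i _ => div_ne_zero (hpi i) (hQ0 _).ne'), Finset.prod_div_distrib]
  have h2 : Real.log ((∏ i, P θ (x i)) / ∏ i, Q (x i)) ≤
      Real.log (Real.exp (√√(n : ℝ)) * (m / ∏ i, Q (x i))) := by
    apply Real.log_le_log (div_pos hx hq)
    rw [← mul_div_assoc]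
    gcongr
  rw [Real.log_mul (Real.exp_pos _).ne' (div_pos hm0 hq).ne', Real.log_exp] at h2
  unfold thr
  linarith

/-- Inequality (15): the limsup of the mixed-source probability of the event
`(1/n) log (P_{X^n}(X^n)/P_{X̄^n}(X^n)) ≤ R + S/√n` is at most
`w({θ : D_θ < R}) + ∫_{{θ : D_θ = R}} Φ_θ(S) dw(θ)`. -/
theorem stmt_10 {𝒳 Θ : Type*} [Fintype 𝒳] [MeasurableSpace Θ]
    (w : Measure Θ) [IsProbabilityMeasure w]
    (P : Θ → 𝒳 → ℝ)
    (hmeas : ∀ x : 𝒳, Measurable fun θ => P θ x)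
    (hdist : ∀ θ, (∀ x, 0 ≤ P θ x) ∧ (∑ x, P θ x) = 1)
    (Q : 𝒳 → ℝ) (hQ0 : ∀ x, 0 < Q x) (hQ1 : ∑ x, Q x = 1)
    (hV : ∀ θ, 0 < Vdiv (P θ) Q)
    (R S : ℝ) :
    Filter.limsup (fun n : ℕ =>
      prob (fun x : Fin n → 𝒳 => ∫ θ, (∏ i, P θ (x i)) ∂w)
        {x | (1 / (n : ℝ)) * Real.log
          ((∫ θ, (∏ i, P θ (x i)) ∂w) / ∏ i, Q (x i)) ≤ R + S / Real.sqrt (n : ℝ)})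
      Filter.atTop ≤
    (w {θ | KL (P θ) Q < R}).toReal +
      ∫ θ in {θ | KL (P θ) Q = R}, stdGauss (S / Real.sqrt (Vdiv (P θ) Q)) ∂w := by

  classical
  have hKL := KL_meas P hmeas Q
  have hlt : MeasurableSet {θ | KL (P θ) Q < R} := measurableSet_lt hKL measurable_const
  have heq : MeasurableSet {θ | KL (P θ) Q = R} := measurableSet_eq_fun hKL measurable_const
  have hprod0 : ∀ θ n (x : Fin n → 𝒳), 0 ≤ ∏ i, P θ (x i) :=
    fun θ n x => Finset.prod_nonneg fun i _ => (hdist θ).1 _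
  have hprodm : ∀ n (x : Fin n → 𝒳), Measurable fun θ => ∏ i, P θ (x i) :=
    fun n x => Finset.measurable_prod _ fun i _ => hmeas _
  have hprodi : ∀ n (x : Fin n → 𝒳), Integrable (fun θ => ∏ i, P θ (x i)) w :=
    fun n x => bdd_int w _ (hprodm n x) (fun θ => hprod0 θ n x) fun θ =>
      Finset.prod_le_one (fun i _ => (hdist θ).1 _)
        fun i _ => p_le_one (hdist θ).1 (hdist θ).2 _
  let H : ℕ → Θ → ℝ := fun n θ => if KL (P θ) Q < R then 1 else FF (P θ) Q R S n
  let g : Θ → ℝ := fun θ => {θ | KL (P θ) Q < R}.indicator (fun _ => (1 : ℝ)) θ +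
    {θ | KL (P θ) Q = R}.indicator (fun θ => stdGauss (S / Real.sqrt (Vdiv (P θ) Q))) θ
  have hHm : ∀ n, Measurable (H n) := fun n =>
    Measurable.ite hlt measurable_const (FF_meas P hmeas Q R S n)
  have hH0 : ∀ n θ, 0 ≤ H n θ := by
    intro n θ
    simp only [H]
    split_ifs
    · exact zero_le_one
    · exact prob_nonneg (hprod0 θ n) _
  have hH1 : ∀ n θ, H n θ ≤ 1 := by
    intro n θ
    simp only [H]
    split_ifs
    · exact le_rfl
    · exact prob_prod_le_one (hdist θ).1 (hdist θ).2 n _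
  have hHi : ∀ n, Integrable (H n) w := fun n => bdd_int w _ (hHm n) (hH0 n) (hH1 n)
  have hlim : ∀ θ, Filter.Tendsto (fun n => H n θ) Filter.atTop (nhds (g θ)) := by
    intro θ
    by_cases h : KL (P θ) Q < R
    · have hg : g θ = 1 := by
        simp [g, h, h.ne]
      simp only [H, h, if_true, hg]
      exact tendsto_const_nhds
    · have hg : g θ = if KL (P θ) Q = R then stdGauss (S / √(Vdiv (P θ) Q)) else 0 := by
        simp [g, h, Set.indicator_apply]
      simp only [H, h, if_false, hg]
      exact FF_lim (hdist θ).1 (hdist θ).2 (hV θ) R S (not_lt.1 h)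
  have hDCT : Filter.Tendsto (fun n => ∫ θ, H n θ ∂w) Filter.atTop (nhds (∫ θ, g θ ∂w)) := by
    refine tendsto_integral_of_dominated_convergence (fun _ => 1)
      (fun n => (hHm n).aestronglyMeasurable) (integrable_const _) (fun n => ?_)
      (ae_of_all _ hlim)
    exact ae_of_all _ fun θ => by
      rw [Real.norm_eq_abs, abs_of_nonneg (hH0 n θ)]; exact hH1 n θ
  have hgm : Measurable g := measurable_of_tendsto_metrizable hHm (tendsto_pi_nhds.2 hlim)
  have hgi : Integrable g w := bdd_int w g hgm
    (fun θ => ge_of_tendsto' (hlim θ) fun n => hH0 n θ)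
    (fun θ => le_of_tendsto' (hlim θ) fun n => hH1 n θ)
  have hgint : ∫ θ, g θ ∂w = (w {θ | KL (P θ) Q < R}).toReal +
      ∫ θ in {θ | KL (P θ) Q = R}, stdGauss (S / Real.sqrt (Vdiv (P θ) Q)) ∂w := by
    have hi1 : Integrable ({θ | KL (P θ) Q < R}.indicator (fun _ => (1 : ℝ))) w :=
      (integrable_const _).indicator hlt
    have hi2 : Integrable ({θ | KL (P θ) Q = R}.indicator
        (fun θ => stdGauss (S / Real.sqrt (Vdiv (P θ) Q)))) w := by
      refine (hgi.sub hi1).congr (ae_of_all _ fun θ => ?_)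
      simp [g]
    simp only [g]
    rw [integral_add hi1 hi2, integral_indicator hlt, integral_indicator heq]
    simp [Measure.real]
  rw [← hgint]
  let B : ℕ → ℝ := fun n => ((n : ℝ) + 1) ^ Fintype.card 𝒳 * Real.exp (-√√(n : ℝ))
  have hbound : Filter.Tendsto (fun n => B n + ∫ θ, H n θ ∂w) Filter.atTop
      (nhds (∫ θ, g θ ∂w)) := by
    simpa using (tail_lim (Fintype.card 𝒳)).add hDCT
  rw [← hbound.limsup_eq]
  refine Filter.limsup_le_limsup ?_ ?_ hbound.isBoundedUnder_le
  · filter_upwards [Filter.eventually_ge_atTop 1] with n hn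
    set A : Set (Fin n → 𝒳) := {x | (1 / (n : ℝ)) * Real.log
          ((∫ θ, (∏ i, P θ (x i)) ∂w) / ∏ i, Q (x i)) ≤ R + S / Real.sqrt (n : ℝ)} with hA
    have hswap : prob (fun x : Fin n → 𝒳 => ∫ θ, (∏ i, P θ (x i)) ∂w) A =
        ∫ θ, prob (fun x : Fin n → 𝒳 => ∏ i, P θ (x i)) A ∂w := by
      unfold prob
      rw [integral_finsetSum]
      · refine Finset.sum_congr rfl fun x _ => ?_
        by_cases hx : x ∈ A <;> simp [hx]
      · intro x _
        by_cases hx : x ∈ A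
        · simpa [hx] using hprodi n x
        · simp [hx]
    rw [hswap]
    have hbm := bad_meas w P hmeas n
    have hbi : Integrable ((Bad w P n).indicator (fun _ => (1 : ℝ))) w :=
      (integrable_const _).indicator hbm
    calc ∫ θ, prob (fun x : Fin n → 𝒳 => ∏ i, P θ (x i)) A ∂w
        ≤ ∫ θ, ((Bad w P n).indicator (fun _ => (1 : ℝ)) θ + H n θ) ∂w := by
          refine integral_mono_of_nonneg (ae_of_all _ fun θ => prob_nonneg (hprod0 θ n) _)
            (hbi.add (hHi n)) (ae_of_all _ fun θ => ?_)
          by_cases hθ : θ ∈ Bad w P n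
          · simp only [hθ, Set.indicator_of_mem]
            have := prob_prod_le_one (hdist θ).1 (hdist θ).2 n A
            linarith [hH0 n θ]
          · simp only [hθ, Set.indicator_of_notMem, not_false_eq_true, zero_add, H]
            split_ifs
            · exact prob_prod_le_one (hdist θ).1 (hdist θ).2 n A
            · exact comp_le w P hdist Q hQ0 R S n hn θ hθ
      _ = w.real (Bad w P n) + ∫ θ, H n θ ∂w := by
          rw [integral_add hbi (hHi n), integral_indicator hbm]
          simp
      _ ≤ B n + ∫ θ, H n θ ∂w := by
          gcongr
          exact bad_le w P hmeas hdist n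
  · refine Filter.IsBoundedUnder.isCoboundedUnder_le ⟨0, ?_⟩
    refine Filter.eventually_map.2 (Filter.Eventually.of_forall fun n => ?_)
    exact prob_nonneg (fun x => integral_nonneg fun θ => hprod0 θ n x) _
end

section
/- (First-order ε-optimum exponent when both hypotheses are mixed memoryless.) Let 𝒳 be a finite alphabet. Let the null hypothesis be the mixed memoryless source P_{X^n}(x) = ∫_Θ ∏_{i=1}^n P_θ(x_i) dw(θ) over a probability space (Θ, w) with measurable family {P_θ} of distributions on 𝒳. Let the alternative hypothesis be the mixed memoryless source P_{X̄^n}(x) = ∫_Σ ∏_{i=1}^n P̄_σ(x_i) dv(σ), where Σ is a compact topological probability space with Borel probability measure v, σ ↦ P̄_σ is continuous, and P̄_σ(x) > 0 for all σ ∈ Σ, x ∈ 𝒳. Let σ(·) be a function from distributions P on 𝒳 to Σ satisfying D(P‖P̄_{σ(P)}) = v-ess inf_σ D(P‖P̄_σ) for all P, where v-ess inf_σ f(σ) = sup{ β : v({σ : f(σ) < β}) = 0 }. Then for every ε with 0 ≤ ε < 1, B_ε(X‖X̄) = sup{ R ∈ ℝ : w({ θ : D(P_θ‖P̄_{σ(P_θ)})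 < R }) ≤ ε }. -/
open scoped BigOperators
open MeasureTheory

/-- Type I error probability `μ_n = Pr{X^n ∉ A_n}` of the acceptance regions `A`
for the general source `X`. -/
noncomputable def typeI {𝒳 : Type*} [Fintype 𝒳] (X : (n : ℕ) → (Fin n → 𝒳) → ℝ)
    (A : (n : ℕ) → Set (Fin n → 𝒳)) (n : ℕ) : ℝ :=
  prob (X n) ((A n)ᶜ)

/-- Type II error probability `λ_n = Pr{X̄^n ∈ A_n}` of the acceptance regions `A`
for the general source `X̄`. -/
noncomputable def typeII {𝒳 : Type*} [Fintype 𝒳] (Xbar : (n : ℕ) → (Fin n → 𝒳) → ℝ)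
    (A : (n : ℕ) → Set (Fin n → 𝒳)) (n : ℕ) : ℝ :=
  prob (Xbar n) (A n)

/-- `R` is `ε`-achievable: there are acceptance regions with
`limsup μ_n ≤ ε` and `liminf (1/n) log (1/λ_n) ≥ R`. -/
def EpsAchievable {𝒳 : Type*} [Fintype 𝒳] (X Xbar : (n : ℕ) → (Fin n → 𝒳) → ℝ)
    (ε R : ℝ) : Prop :=
  ∃ A : (n : ℕ) → Set (Fin n → 𝒳),
    Filter.limsup (typeI X A) Filter.atTop ≤ ε ∧
    R ≤ Filter.liminf (fun n : ℕ => (1 / (n : ℝ)) * Real.log (1 / typeII Xbar A n))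
      Filter.atTop

/-- The first-order `ε`-optimum exponent `B_ε(X‖X̄)`. -/
noncomputable def Beps {𝒳 : Type*} [Fintype 𝒳]
    (X Xbar : (n : ℕ) → (Fin n → 𝒳) → ℝ) (ε : ℝ) : ℝ :=
  sSup {R : ℝ | EpsAchievable X Xbar ε R}

open Finset in
lemma aux_mass {α : Type*} [Fintype α] (p : α → ℝ) (hp : ∑ a, p a = 1) (n : ℕ) :
    ∑ x : Fin n → α, ∏ i, p (x i) = 1 := by
  have := Finset.prod_univ_sum (fun _ : Fin n => (univ : Finset α)) (fun _ a => p a)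
  simp only [hp, Finset.prod_const_one, Fintype.piFinset_univ] at this
  exact this.symm

lemma aux_first {α : Type*} [Fintype α] (p : α → ℝ) (hp : ∑ a, p a = 1) (f : α → ℝ)
    (hf : ∑ a, p a * f a = 0) (n : ℕ) :
    ∑ x : Fin n → α, (∏ i, p (x i)) * (∑ i, f (x i)) = 0 := by
  induction n with
  | zero => simp
  | succ n ih =>
    rw [← (Fin.consEquiv (fun _ : Fin (n+1) => α)).sum_comp, Fintype.sum_prod_type]
    simp only [Fin.consEquiv, Equiv.coe_fn_mk, Fin.prod_univ_succ, Fin.sum_univ_succ,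
      Fin.cons_zero, Fin.cons_succ]
    have : ∀ a : α, ∑ x : Fin n → α, p a * (∏ i, p (x i)) * (f a + ∑ i, f (x i))
        = p a * f a := by
      intro a
      have e : ∀ x : Fin n → α, p a * (∏ i, p (x i)) * (f a + ∑ i, f (x i))
        = (p a * f a) * (∏ i, p (x i)) + p a * ((∏ i, p (x i)) * ∑ i, f (x i)) := by
        intro x; ring
      simp only [e, Finset.sum_add_distrib, ← Finset.mul_sum, ih, aux_mass p hp]
      ring
    simp only [this, hf]

lemma aux_second {α : Type*} [Fintype α] (p : α → ℝ) (hp : ∑ a, p a = 1) (f : α → ℝ)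
    (hf : ∑ a, p a * f a = 0) (n : ℕ) :
    ∑ x : Fin n → α, (∏ i, p (x i)) * (∑ i, f (x i))^2 = n * ∑ a, p a * f a ^ 2 := by
  induction n with
  | zero => simp
  | succ n ih =>
    rw [← (Fin.consEquiv (fun _ : Fin (n+1) => α)).sum_comp, Fintype.sum_prod_type]
    simp only [Fin.consEquiv, Equiv.coe_fn_mk, Fin.prod_univ_succ, Fin.sum_univ_succ,
      Fin.cons_zero, Fin.cons_succ]
    have : ∀ a : α, ∑ x : Fin n → α, p a * (∏ i, p (x i)) * (f a + ∑ i, f (x i))^2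
        = p a * f a ^ 2 + p a * (n * ∑ a, p a * f a ^ 2) := by
      intro a
      have e : ∀ x : Fin n → α, p a * (∏ i, p (x i)) * (f a + ∑ i, f (x i))^2
        = (p a * f a^2) * (∏ i, p (x i)) + (2 * p a * f a) * ((∏ i, p (x i)) * ∑ i, f (x i))
          + p a * ((∏ i, p (x i)) * (∑ i, f (x i))^2) := by
        intro x; ring
      simp only [e, Finset.sum_add_distrib, ← Finset.mul_sum, ih, aux_mass p hp,
        aux_first p hp f hf]
      ring
    simp only [this, Finset.sum_add_distrib, ← Finset.sum_mul, hp]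
    push_cast; ring

open Classical in
/-- number of occurrences -/
noncomputable def cntA {α : Type*} {n : ℕ} (x : Fin n → α) (a : α) : ℕ :=
  (Finset.univ.filter (fun i => x i = a)).card

/-- empirical distribution -/
noncomputable def empA {α : Type*} {n : ℕ} (x : Fin n → α) (a : α) : ℝ := (cntA x a : ℝ) / n

lemma aux_cnt_sum {α : Type*} [Fintype α] {n : ℕ} (x : Fin n → α) (g : α → ℝ) :
    ∑ a, (cntA x a : ℝ) * g a = ∑ i, g (x i) := by
  classical
  have : ∀ i, g (x i) = ∑ a, if x i = a then g a else 0 := by intro i; simp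
  simp only [this]
  rw [Finset.sum_comm]
  refine Finset.sum_congr rfl fun a _ => ?_
  rw [← Finset.sum_filter, Finset.sum_const, nsmul_eq_mul]
  unfold cntA
  congr!

lemma aux_emp_sum {α : Type*} [Fintype α] {n : ℕ} (hn : 0 < n) (x : Fin n → α) (g : α → ℝ) :
    ∑ i, g (x i) = n * ∑ a, empA x a * g a := by
  rw [← aux_cnt_sum, Finset.mul_sum]
  refine Finset.sum_congr rfl fun a _ => ?_
  unfold empA
  have : (n:ℝ) ≠ 0 := by positivity
  field_simp

lemma aux_emp_simplex {α : Type*} [Fintype α] {n : ℕ} (hn : 0 < n) (x : Fin n → α) :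
    empA x ∈ stdSimplex ℝ α := by
  refine ⟨fun a => by unfold empA; positivity, ?_⟩
  have h := aux_emp_sum hn x (fun _ => (1:ℝ))
  simp only [Finset.sum_const, Finset.card_univ, Fintype.card_fin, nsmul_eq_mul, mul_one] at h
  have : (0:ℝ) < n := by positivity
  nlinarith

lemma aux_emp_pos {α : Type*} {n : ℕ} (x : Fin n → α) (i : Fin n) : 0 < empA x (x i) := by
  classical
  unfold empA cntA
  have hn : 0 < n := Fin.pos i
  have : 0 < (Finset.univ.filter (fun j => x j = x i)).card := Finset.card_pos.mpr ⟨i, by simp⟩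
  have h2 : (0:ℝ) < ((Finset.univ.filter (fun j => x j = x i)).card : ℝ) := by exact_mod_cast this
  have h3 : (0:ℝ) < n := by exact_mod_cast hn
  convert div_pos h2 h3

lemma aux_change {α : Type*} {n : ℕ} (p q : α → ℝ) (x : Fin n → α) (hp : ∀ i, 0 < p (x i))
    (hq : ∀ i, 0 < q (x i)) :
    ∏ i, p (x i) = Real.exp (∑ i, Real.log (p (x i) / q (x i))) * ∏ i, q (x i) := by
  rw [Real.exp_sum, ← Finset.prod_mul_distrib]
  refine Finset.prod_congr rfl fun i _ => ?_
  rw [Real.exp_log (div_pos (hp i) (hq i))]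
  have := (hq i).ne'
  field_simp

/-- not typical set -/
def atyp {α : Type*} (p : α → ℝ) (n : ℕ) (δ : ℝ) : Set (Fin n → α) :=
  {x | ∃ a, δ < |empA x a - p a|}

lemma aux_prob_nonneg {β : Type*} [Fintype β] (Q : β → ℝ) (h : ∀ x, 0 ≤ Q x) (A : Set β) :
    0 ≤ prob Q A := Finset.sum_nonneg fun x _ => Set.indicator_nonneg (fun y _ => h y) x

lemma aux_prob_mono {β : Type*} [Fintype β] (Q : β → ℝ) (h : ∀ x, 0 ≤ Q x) {A B : Set β}
    (hAB : A ⊆ B) : prob Q A ≤ prob Q B :=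
  Finset.sum_le_sum fun x _ => Set.indicator_le_indicator_of_subset hAB h x

lemma aux_prob_compl {β : Type*} [Fintype β] (Q : β → ℝ) (A : Set β) :
    prob Q A + prob Q Aᶜ = ∑ x, Q x := by
  unfold prob
  rw [← Finset.sum_add_distrib]
  refine Finset.sum_congr rfl fun x _ => ?_
  exact Set.indicator_self_add_compl_apply A Q x

lemma aux_cheb {α : Type*} [Fintype α] (p : α → ℝ) (hp : p ∈ stdSimplex ℝ α) {n : ℕ}
    (hn : 0 < n) {δ : ℝ} (hδ : 0 < δ) :
    prob (fun x : Fin n → α => ∏ i, p (x i)) (atyp p n δ) ≤ (Fintype.card α / δ^2) / n := by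
  classical
  have hn' : (0:ℝ) < n := by exact_mod_cast hn
  have key : ∀ a, ∑ x : Fin n → α, (∏ i, p (x i)) * (empA x a - p a)^2 ≤ 1 / n := by
    intro a
    have hf : ∑ b, p b * ((if b = a then 1 else 0) - p a) = 0 := by
      simp [mul_sub, Finset.sum_sub_distrib, ← Finset.sum_mul, hp.2]
    have h2 := aux_second p hp.2 (fun b => (if b = a then 1 else 0) - p a) hf n
    have e : ∀ x : Fin n → α, ∑ i, ((if x i = a then (1:ℝ) else 0) - p a) = n * (empA x a - p a) := by
      intro x
      rw [aux_emp_sum hn x (fun b => (if b = a then (1:ℝ) else 0) - p a)]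
      simp [mul_sub, Finset.sum_sub_distrib, ← Finset.sum_mul, (aux_emp_simplex hn x).2]
    simp only [e] at h2
    have h3 : ∑ b, p b * ((if b = a then 1 else 0) - p a)^2 ≤ 1 := by
      refine le_trans ?_ hp.2.le
      refine Finset.sum_le_sum fun b _ => ?_
      have h0 := hp.1 a
      have h1 : p a ≤ 1 := by rw [← hp.2]; exact Finset.single_le_sum (fun b _ => hp.1 b) (Finset.mem_univ a)
      refine mul_le_of_le_one_right (hp.1 b) ?_
      split_ifs <;> nlinarith
    have h4 : ∑ x : Fin n → α, (∏ i, p (x i)) * (n * (empA x a - p a))^2 =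
      n^2 * ∑ x : Fin n → α, (∏ i, p (x i)) * (empA x a - p a)^2 := by
      rw [Finset.mul_sum]; refine Finset.sum_congr rfl fun x _ => by ring
    rw [h4] at h2
    rw [le_div_iff₀ hn']
    have : (n:ℝ) * (n * ∑ x : Fin n → α, (∏ i, p (x i)) * (empA x a - p a)^2) ≤ n * 1 := by
      nlinarith
    have := le_of_mul_le_mul_left this hn'
    linarith
  have hb : ∀ x : Fin n → α, (atyp p n δ).indicator (fun x : Fin n → α => ∏ i, p (x i)) x ≤
      ∑ a, (1/δ^2) * ((∏ i, p (x i)) * (empA x a - p a)^2) := by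
    intro x
    have hnn : 0 ≤ ∏ i, p (x i) := Finset.prod_nonneg fun i _ => hp.1 _
    have hall : ∀ a ∈ Finset.univ, 0 ≤ (1/δ^2) * ((∏ i, p (x i)) * (empA x a - p a)^2) := by
      intro a _; positivity
    by_cases hx : x ∈ atyp p n δ
    · rw [Set.indicator_of_mem hx]
      obtain ⟨a, ha⟩ := hx
      refine le_trans ?_ (Finset.single_le_sum hall (Finset.mem_univ a))
      have : δ^2 ≤ (empA x a - p a)^2 := by
        rw [← sq_abs (empA x a - p a)]; gcongr
      have h1 : 1 ≤ (1/δ^2) * (empA x a - p a)^2 := by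
        rw [one_div_mul_eq_div, le_div_iff₀ (by positivity)]; linarith
      nlinarith
    · rw [Set.indicator_of_notMem hx]
      exact Finset.sum_nonneg hall
  unfold prob
  calc _ ≤ ∑ x : Fin n → α, ∑ a, (1/δ^2) * ((∏ i, p (x i)) * (empA x a - p a)^2) :=
        Finset.sum_le_sum fun x _ => hb x
    _ = ∑ a, (1/δ^2) * ∑ x : Fin n → α, ((∏ i, p (x i)) * (empA x a - p a)^2) := by
        rw [Finset.sum_comm]; simp only [Finset.mul_sum]
    _ ≤ ∑ a : α, (1/δ^2) * (1/n) := by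
        refine Finset.sum_le_sum fun a _ => ?_
        have := key a
        gcongr
    _ = _ := by simp; field_simp

lemma aux_types {α : Type*} [Fintype α] {n : ℕ} (hn : 0 < n) :
    ∑ x : Fin n → α, ∏ i, empA x (x i) ≤ ((n:ℝ)+1)^(Fintype.card α) := by
  classical
  have hmap : ∀ x ∈ (Finset.univ : Finset (Fin n → α)),
      cntA x ∈ Fintype.piFinset (fun _ : α => Finset.range (n+1)) := by
    intro x _
    simp only [Fintype.mem_piFinset, Finset.mem_range]
    intro a
    have : cntA x a ≤ n := by
      unfold cntA
      exact (Finset.card_le_univ _).trans (by simp)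
    omega
  rw [← Finset.sum_fiberwise_of_maps_to hmap]
  calc _ ≤ ∑ k ∈ Fintype.piFinset (fun _ : α => Finset.range (n+1)), (1:ℝ) := by
        refine Finset.sum_le_sum fun k _ => ?_
        by_cases h : ∃ y : Fin n → α, cntA y = k
        · obtain ⟨y, hy⟩ := h
          rw [← aux_mass (empA y) (aux_emp_simplex hn y).2 n]
          calc _ = ∑ x ∈ Finset.univ.filter (fun x : Fin n → α => cntA x = k), ∏ i, empA y (x i) := by
                refine Finset.sum_congr rfl fun x hx => ?_
                have hx : cntA x = k := by simpa using hx
                refine Finset.prod_congr rfl fun i _ => ?_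
                unfold empA; rw [hx, hy]
            _ ≤ _ := Finset.sum_le_sum_of_subset_of_nonneg (Finset.subset_univ _)
                fun x _ _ => Finset.prod_nonneg fun i _ => (aux_emp_simplex hn y).1 _
        · rw [Finset.filter_false_of_mem]
          · simp
          · intro x _ hx; exact h ⟨x, hx⟩
    _ = _ := by simp

lemma aux_le_one {α : Type*} [Fintype α] {p : α → ℝ} (hp : p ∈ stdSimplex ℝ α) (a : α) :
    p a ≤ 1 := by
  rw [← hp.2]; exact Finset.single_le_sum (fun b _ => hp.1 b) (Finset.mem_univ a)

section mix
variable {α Ω : Type*} [Fintype α] [MeasurableSpace Ω] (μ : Measure Ω) [IsProbabilityMeasure μ]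
  (Q : Ω → α → ℝ) (hm : ∀ a, Measurable fun ω => Q ω a) (hQ : ∀ ω, Q ω ∈ stdSimplex ℝ α)

include hm hQ

lemma aux_int_prod {n : ℕ} (x : Fin n → α) : Integrable (fun ω => ∏ i, Q ω (x i)) μ := by
  refine Integrable.of_bound (C := 1) ?_ ?_
  · exact (Finset.measurable_prod _ fun i _ => hm (x i)).aestronglyMeasurable
  · refine Filter.Eventually.of_forall fun ω => ?_
    rw [Real.norm_of_nonneg (Finset.prod_nonneg fun i _ => (hQ ω).1 _)]
    exact Finset.prod_le_one (fun i _ => (hQ ω).1 _) fun i _ => aux_le_one (hQ ω) _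

lemma aux_int_ind {n : ℕ} (A : Set (Fin n → α)) (x : Fin n → α) :
    Integrable (fun ω => A.indicator (fun x => ∏ i, Q ω (x i)) x) μ := by
  by_cases hx : x ∈ A
  · simpa [Set.indicator_of_mem hx] using aux_int_prod μ Q hm hQ x
  · simp [Set.indicator_of_notMem hx]

lemma aux_int_prob {n : ℕ} (A : Set (Fin n → α)) :
    Integrable (fun ω => prob (fun x : Fin n → α => ∏ i, Q ω (x i)) A) μ := by
  unfold prob
  exact integrable_finset_sum _ fun x _ => aux_int_ind μ Q hm hQ A x

lemma aux_mix {n : ℕ} (A : Set (Fin n → α)) :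
    prob (fun x : Fin n → α => ∫ ω, (∏ i, Q ω (x i)) ∂μ) A =
      ∫ ω, prob (fun x : Fin n → α => ∏ i, Q ω (x i)) A ∂μ := by
  unfold prob
  rw [integral_finset_sum _ fun x _ => aux_int_ind μ Q hm hQ A x]
  refine Finset.sum_congr rfl fun x _ => ?_
  by_cases hx : x ∈ A
  · simp [Set.indicator_of_mem hx]
  · simp [Set.indicator_of_notMem hx]

omit hm [MeasurableSpace Ω] in
lemma aux_prob01 {n : ℕ} (A : Set (Fin n → α)) (ω : Ω) :
    0 ≤ prob (fun x : Fin n → α => ∏ i, Q ω (x i)) A ∧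
    prob (fun x : Fin n → α => ∏ i, Q ω (x i)) A ≤ 1 := by
  have hn : ∀ x : Fin n → α, 0 ≤ ∏ i, Q ω (x i) := fun x =>
    Finset.prod_nonneg fun i _ => (hQ ω).1 _
  have h1 := aux_prob_nonneg _ hn A
  have h2 := aux_prob_nonneg _ hn Aᶜ
  have h3 := aux_prob_compl (fun x : Fin n → α => ∏ i, Q ω (x i)) A
  rw [aux_mass (Q ω) (hQ ω).2 n] at h3
  exact ⟨h1, by linarith⟩

lemma aux_mix01 {n : ℕ} (A : Set (Fin n → α)) :
    0 ≤ prob (fun x : Fin n → α => ∫ ω, (∏ i, Q ω (x i)) ∂μ) A ∧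
    prob (fun x : Fin n → α => ∫ ω, (∏ i, Q ω (x i)) ∂μ) A ≤ 1 := by
  rw [aux_mix μ Q hm hQ]
  refine ⟨integral_nonneg fun ω => (aux_prob01 Q hQ A ω).1, ?_⟩
  calc _ ≤ ∫ ω, (1:ℝ) ∂μ := integral_mono (aux_int_prob μ Q hm hQ A) (integrable_const _)
        fun ω => (aux_prob01 Q hQ A ω).2
    _ = 1 := by simp

lemma aux_lower {C : ℝ} (hC : ∀ ω a, |Real.log (Q ω a)| ≤ C) (hpos : ∀ ω a, 0 < Q ω a)
    {n : ℕ} (A : Set (Fin n → α)) (hA : A.Nonempty) :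
    Real.exp (-(n * C)) ≤ prob (fun x : Fin n → α => ∫ ω, (∏ i, Q ω (x i)) ∂μ) A := by
  obtain ⟨x, hx⟩ := hA
  have h1 : ∀ ω, Real.exp (-(n*C)) ≤ ∏ i, Q ω (x i) := by
    intro ω
    have : Real.exp (-(n*C)) = ∏ i : Fin n, Real.exp (-C) := by
      rw [← Real.exp_sum]; simp
    rw [this]
    refine Finset.prod_le_prod (fun i _ => (Real.exp_pos _).le) fun i _ => ?_
    rw [← Real.exp_log (hpos ω (x i))]
    exact Real.exp_le_exp.mpr (neg_le_of_abs_le (hC _ _))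
  calc _ = ∫ ω, Real.exp (-(n*C)) ∂μ := by simp
    _ ≤ ∫ ω, (∏ i, Q ω (x i)) ∂μ := integral_mono (integrable_const _) (aux_int_prod μ Q hm hQ x) h1
    _ = A.indicator (fun x : Fin n → α => ∫ ω, (∏ i, Q ω (x i)) ∂μ) x := by
        rw [Set.indicator_of_mem hx]
    _ ≤ _ := Finset.single_le_sum (f := fun y => A.indicator (fun x : Fin n → α => ∫ ω, (∏ i, Q ω (x i)) ∂μ) y)
        (fun y _ => Set.indicator_nonneg (fun z _ => integral_nonneg fun ω =>
          Finset.prod_nonneg fun i _ => (hQ ω).1 _) y) (Finset.mem_univ x)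

lemma aux_u {C : ℝ} (hC0 : 0 ≤ C) (hC : ∀ ω a, |Real.log (Q ω a)| ≤ C) (hpos : ∀ ω a, 0 < Q ω a)
    (A : (n : ℕ) → Set (Fin n → α)) (n : ℕ) :
    0 ≤ (1 / (n : ℝ)) * Real.log (1 / typeII (fun n x => ∫ ω, (∏ i, Q ω (x i)) ∂μ) A n) ∧
    (1 / (n : ℝ)) * Real.log (1 / typeII (fun n x => ∫ ω, (∏ i, Q ω (x i)) ∂μ) A n) ≤ C := by
  unfold typeII
  rcases Nat.eq_zero_or_pos n with rfl | hn
  · simp [hC0]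
  have hn' : (0:ℝ) < n := by exact_mod_cast hn
  rcases (A n).eq_empty_or_nonempty with h | h
  · simp [h, prob, hC0]
  have h1 := aux_lower μ Q hm hQ hC hpos (A n) h
  have h2 := (aux_mix01 μ Q hm hQ (A n)).2
  have h0 := (Real.exp_pos _).trans_le h1
  rw [one_div (prob _ _), Real.log_inv]
  have h3 := Real.log_nonpos h0.le h2
  have h4 := (Real.le_log_iff_exp_le h0).mpr h1
  constructor
  · have : 0 ≤ 1 / (n:ℝ) := by positivity
    exact mul_nonneg this (by linarith)
  · rw [one_div_mul_eq_div, div_le_iff₀ hn']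
    linarith
end mix

lemma aux_ess {Λ : Type*} [MeasurableSpace Λ] (v : Measure Λ) [IsProbabilityMeasure v]
    (f : Λ → ℝ) (M : ℝ) (hM : ∀ σ, |f σ| ≤ M) (h : ℝ)
    (hh : h = sSup {β : ℝ | v {σ | f σ < β} = 0}) :
    (∀ᵐ σ ∂v, h ≤ f σ) ∧ ∀ η > 0, v {σ | f σ < h + η} ≠ 0 := by
  have hne : ({β : ℝ | v {σ | f σ < β} = 0}).Nonempty := by
    refine ⟨-M, ?_⟩
    have : {σ | f σ < -M} = ∅ := by
      ext σ; simp only [Set.mem_setOf_eq, Set.mem_empty_iff_false, iff_false, not_lt]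
      exact neg_le_of_abs_le (hM σ)
    simp [this]
  have hbd : BddAbove {β : ℝ | v {σ | f σ < β} = 0} := by
    refine ⟨M, fun β hβ => ?_⟩
    by_contra hlt
    push Not at hlt
    have : {σ | f σ < β} = Set.univ := by
      ext σ; simp only [Set.mem_setOf_eq, Set.mem_univ, iff_true]
      exact (le_of_abs_le (hM σ)).trans_lt hlt
    simp [this] at hβ
  constructor
  · have : ∀ᵐ σ ∂v, ∀ k : ℕ, h - 1 / ((k:ℝ)+1) ≤ f σ := by
      rw [ae_all_iff]
      intro k
      have hk : h - 1/((k:ℝ)+1) < sSup {β : ℝ | v {σ | f σ < β} = 0} := by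
        rw [← hh]; have : 0 < 1/((k:ℝ)+1) := by positivity
        linarith
      obtain ⟨β, hβ, hlt⟩ := exists_lt_of_lt_csSup hne hk
      rw [ae_iff]
      refine measure_mono_null ?_ hβ
      intro σ hσ
      simp only [Set.mem_setOf_eq, not_le] at hσ ⊢
      linarith
    filter_upwards [this] with σ hσ
    refine le_of_forall_pos_le_add fun e he => ?_
    obtain ⟨k, hk⟩ := exists_nat_one_div_lt he
    have := hσ k
    linarith
  · intro η hη h0
    have := le_csSup hbd (show h + η ∈ {β : ℝ | v {σ | f σ < β} = 0} from h0)
    linarith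

lemma aux_KL {α : Type*} [Fintype α] (p q : α → ℝ) (hq : ∀ a, 0 < q a) :
    KL p q = (∑ a, p a * Real.log (p a)) - ∑ a, p a * Real.log (q a) := by
  unfold KL
  rw [← Finset.sum_sub_distrib]
  refine Finset.sum_congr rfl fun a _ => ?_
  by_cases h : p a = 0
  · simp [h]
  · rw [Real.log_div h (hq a).ne']; ring

lemma aux_KL_diff {α : Type*} [Fintype α] (p p' q : α → ℝ) (hq : ∀ a, 0 < q a) {C : ℝ}
    (hC : ∀ a, |Real.log (q a)| ≤ C) :
    KL p q ≤ KL p' q + |(∑ a, p a * Real.log (p a)) - ∑ a, p' a * Real.log (p' a)|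
      + C * ∑ a, |p a - p' a| := by
  rw [aux_KL p q hq, aux_KL p' q hq]
  have h1 : (∑ a, p' a * Real.log (q a)) - ∑ a, p a * Real.log (q a) ≤ C * ∑ a, |p a - p' a| := by
    rw [← Finset.sum_sub_distrib, Finset.mul_sum]
    refine Finset.sum_le_sum fun a _ => ?_
    calc _ = (p' a - p a) * Real.log (q a) := by ring
      _ ≤ |(p' a - p a) * Real.log (q a)| := le_abs_self _
      _ = |Real.log (q a)| * |p a - p' a| := by rw [abs_mul, abs_sub_comm]; ring
      _ ≤ _ := by gcongr; exact hC a
  have h2 := le_abs_self ((∑ a, p a * Real.log (p a)) - ∑ a, p' a * Real.log (p' a))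
  linarith

lemma aux_cont {α Λ : Type*} [Fintype α] [MeasurableSpace Λ] (v : Measure Λ)
    (Pbar : Λ → α → ℝ) (hpos : ∀ σ a, 0 < Pbar σ a) {C : ℝ}
    (hC : ∀ σ a, |Real.log (Pbar σ a)| ≤ C) (h : (α → ℝ) → ℝ)
    (h1 : ∀ p ∈ stdSimplex ℝ α, ∀ᵐ σ ∂v, h p ≤ KL p (Pbar σ))
    (h2 : ∀ p ∈ stdSimplex ℝ α, ∀ η > 0, v {σ | KL p (Pbar σ) < h p + η} ≠ 0) :
    ContinuousOn h (stdSimplex ℝ α) := by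
  have key : ∀ p ∈ stdSimplex ℝ α, ∀ q ∈ stdSimplex ℝ α,
      h p - h q ≤ |(∑ a, p a * Real.log (p a)) - ∑ a, q a * Real.log (q a)|
      + C * ∑ a, |p a - q a| := by
    intro p hp q hq
    refine le_of_forall_pos_le_add fun η hη => ?_
    have : ∃ σ, KL q (Pbar σ) < h q + η ∧ h p ≤ KL p (Pbar σ) := by
      by_contra hcon
      push Not at hcon
      apply h2 q hq η hη
      refine measure_mono_null ?_ (ae_iff.mp (h1 p hp))
      intro σ hσ
      simp only [Set.mem_setOf_eq, not_le] at hσ ⊢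
      exact hcon σ hσ
    obtain ⟨σ, hσ1, hσ2⟩ := this
    have := aux_KL_diff p q (Pbar σ) (hpos σ) (hC σ)
    linarith
  intro q hq
  rw [ContinuousWithinAt, tendsto_iff_dist_tendsto_zero]
  have hφ : Continuous (fun p : α → ℝ => |(∑ a, p a * Real.log (p a)) - ∑ a, q a * Real.log (q a)|
      + C * ∑ a, |p a - q a|) := by
    have : Continuous (fun p : α → ℝ => ∑ a, p a * Real.log (p a)) :=
      continuous_finset_sum _ fun a _ => Real.continuous_mul_log.comp (continuous_apply a)
    fun_prop
  have hφ0 := (hφ.tendsto q).mono_left (nhdsWithin_le_nhds (s := stdSimplex ℝ α))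
  simp only [sub_self, abs_zero, Finset.sum_const_zero, mul_zero, add_zero] at hφ0
  refine squeeze_zero' (Filter.Eventually.of_forall fun p => dist_nonneg) ?_ hφ0
  filter_upwards [self_mem_nhdsWithin] with p hp
  rw [Real.dist_eq, abs_le]
  have a1 := key p hp q hq
  have a2 := key q hq p hp
  rw [abs_sub_comm] at a2
  simp only [abs_sub_comm (q _) (p _)] at a2
  exact ⟨by linarith, a1⟩

lemma aux_direct {α Θ Λ : Type*} [Fintype α] [MeasurableSpace Θ] [MeasurableSpace Λ]
    (w : Measure Θ) [IsProbabilityMeasure w] (v : Measure Λ) [IsProbabilityMeasure v]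
    (P : Θ → α → ℝ) (hm : ∀ a, Measurable fun θ => P θ a) (hP : ∀ θ, P θ ∈ stdSimplex ℝ α)
    (Q : Λ → α → ℝ) (hmQ : ∀ a, Measurable fun σ => Q σ a) (hQ : ∀ σ, Q σ ∈ stdSimplex ℝ α)
    (hpos : ∀ σ a, 0 < Q σ a) {C : ℝ} (hC0 : 0 ≤ C)
    (hC : ∀ σ a, |Real.log (Q σ a)| ≤ C) (h : (α → ℝ) → ℝ)
    (h1 : ∀ p ∈ stdSimplex ℝ α, ∀ᵐ σ ∂v, h p ≤ KL p (Q σ))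
    (hc : ContinuousOn h (stdSimplex ℝ α))
    (hB : ∀ r, MeasurableSet {θ | h (P θ) < r})
    {ε : ℝ} (hε1 : ε < 1) {R γ : ℝ} (hγ : 0 < γ) (hR : (w {θ | h (P θ) < R}).toReal ≤ ε) :
    EpsAchievable (fun n x => ∫ θ, (∏ i, P θ (x i)) ∂w)
        (fun n x => ∫ σ, (∏ i, Q σ (x i)) ∂v) ε (R - γ) := by
  have huc := (isCompact_stdSimplex ℝ α).uniformContinuousOn_of_continuous hc
  obtain ⟨δ, hδ, hδ'⟩ := Metric.uniformContinuousOn_iff.mp huc (γ/2) (by positivity)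
  set A : (n : ℕ) → Set (Fin n → α) := fun n => {x | R - γ/2 ≤ h (empA x)} with hA
  set X : (n : ℕ) → (Fin n → α) → ℝ := fun n x => ∫ θ, (∏ i, P θ (x i)) ∂w with hX
  set Y : (n : ℕ) → (Fin n → α) → ℝ := fun n x => ∫ σ, (∏ i, Q σ (x i)) ∂v with hY
  set K : ℝ := Fintype.card α / (δ/2)^2 with hK
  -- type I bound
  have hI : ∀ n : ℕ, 0 < n → typeI X A n ≤ ε + K / n := by
    intro n hn
    unfold typeI
    rw [hX, aux_mix w P hm hP]
    have hpt : ∀ θ, prob (fun x : Fin n → α => ∏ i, P θ (x i)) (A n)ᶜ ≤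
        ({θ | h (P θ) < R}).indicator (fun _ => (1:ℝ)) θ + K / n := by
      intro θ
      have hK0 : 0 ≤ K / n := by positivity
      by_cases hθ : θ ∈ {θ | h (P θ) < R}
      · rw [Set.indicator_of_mem hθ]
        have := (aux_prob01 P hP (A n)ᶜ θ).2
        linarith
      · rw [Set.indicator_of_notMem hθ, zero_add]
        refine le_trans (aux_prob_mono _ (fun x => Finset.prod_nonneg fun i _ => (hP θ).1 _) ?_)
          (aux_cheb (P θ) (hP θ) hn (half_pos hδ))
        intro x hx
        by_contra hna
        simp only [atyp, Set.mem_setOf_eq, not_exists, not_lt] at hna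
        have hd : dist (empA x) (P θ) < δ := by
          refine lt_of_le_of_lt ?_ (half_lt_self hδ)
          rw [dist_pi_le_iff (half_pos hδ).le]
          intro a; rw [Real.dist_eq]; exact hna a
        have := hδ' _ (aux_emp_simplex hn x) _ (hP θ) hd
        rw [Real.dist_eq, abs_lt] at this
        simp only [hA, Set.mem_compl_iff, Set.mem_setOf_eq, not_le] at hx
        simp only [Set.mem_setOf_eq, not_lt] at hθ
        linarith [this.1]
    have hint : Integrable (({θ | h (P θ) < R}).indicator (fun _ => (1:ℝ))) w :=
      (integrable_const _).indicator (hB R)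
    calc _ ≤ ∫ θ, (({θ | h (P θ) < R}).indicator (fun _ => (1:ℝ)) θ + K / n) ∂w :=
          integral_mono (aux_int_prob w P hm hP _) (hint.add (integrable_const _)) hpt
      _ = (w {θ | h (P θ) < R}).toReal + K / n := by
          rw [integral_add hint (integrable_const _), integral_indicator_const _ (hB R)]
          simp [Measure.real]
      _ ≤ _ := by linarith
  have hlim : Filter.Tendsto (fun n : ℕ => ε + K / n) Filter.atTop (nhds ε) := by
    simpa using (tendsto_const_div_atTop_nhds_zero_nat K).const_add ε
  have hI0 : ∀ n, 0 ≤ typeI X A n := fun n => (aux_mix01 w P hm hP (A n)ᶜ).1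
  refine ⟨A, ?_, ?_⟩
  · rw [← hlim.limsup_eq]
    refine Filter.limsup_le_limsup ?_ ?_ ?_
    · filter_upwards [Filter.eventually_gt_atTop 0] with n hn using hI n hn
    · exact Filter.isCoboundedUnder_le_of_le _ hI0
    · exact hlim.isBoundedUnder_le
  · -- type II
    have hII : ∀ n : ℕ, 0 < n → typeII Y A n ≤
        Real.exp (-(n * (R - γ/2))) * ((n:ℝ)+1)^(Fintype.card α) := by
      intro n hn
      refine le_trans ?_ (mul_le_mul_of_nonneg_left (aux_types hn) (Real.exp_pos _).le)
      unfold typeII prob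
      rw [Finset.mul_sum]
      refine Finset.sum_le_sum fun x _ => ?_
      have hT : 0 ≤ ∏ i, empA x (x i) := Finset.prod_nonneg fun i _ => (aux_emp_pos x i).le
      by_cases hx : x ∈ A n
      · rw [Set.indicator_of_mem hx]
        calc Y n x = ∫ σ, (∏ i, Q σ (x i)) ∂v := rfl
          _ ≤ ∫ σ, Real.exp (-(n * (R - γ/2))) * ∏ i, empA x (x i) ∂v := by
            refine integral_mono_ae (aux_int_prod v Q hmQ hQ x) (integrable_const _) ?_
            filter_upwards [h1 _ (aux_emp_simplex hn x)] with σ hσ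
            have e := aux_change (empA x) (Q σ) x (aux_emp_pos x) (fun i => hpos σ _)
            rw [aux_emp_sum hn x (fun a => Real.log (empA x a / Q σ a))] at e
            have e2 : ∑ a, empA x a * Real.log (empA x a / Q σ a) = KL (empA x) (Q σ) := rfl
            rw [e2] at e
            rw [e, ← mul_assoc, ← Real.exp_add]
            refine le_mul_of_one_le_left (Finset.prod_nonneg fun i _ => (hpos σ _).le) ?_
            refine Real.one_le_exp ?_
            have : R - γ/2 ≤ KL (empA x) (Q σ) := le_trans hx hσ
            have hn' : (0:ℝ) < n := by exact_mod_cast hn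
            nlinarith
          _ = _ := by simp
      · rw [Set.indicator_of_notMem hx]
        exact mul_nonneg (Real.exp_pos _).le hT
    have hev : ∀ᶠ n : ℕ in Filter.atTop, ((n:ℝ)+1)^(Fintype.card α) ≤ Real.exp (n * (γ/2)) := by
      have hr : Real.exp (-(γ/2)) < 1 := by rw [Real.exp_lt_one_iff]; linarith
      have t := tendsto_pow_const_mul_const_pow_of_lt_one (Fintype.card α) (Real.exp_pos (-(γ/2))).le hr
      have t' := t.comp (Filter.tendsto_add_atTop_nat 1)
      filter_upwards [t'.eventually_lt_const (Real.exp_pos (-(γ/2)))] with n hn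
      simp only [Function.comp, Nat.cast_add, Nat.cast_one, pow_succ (Real.exp _)] at hn
      rw [← mul_assoc] at hn
      have hn2 : ((n:ℝ)+1)^(Fintype.card α) * Real.exp (-(γ/2))^n < 1 := by
        have := Real.exp_pos (-(γ/2))
        nlinarith
      rw [← Real.exp_nat_mul] at hn2
      have : Real.exp (n * (γ/2)) * Real.exp (n * -(γ/2)) = 1 := by
        rw [← Real.exp_add]; simp
      exact (lt_of_mul_lt_mul_right (hn2.trans_eq this.symm) (Real.exp_pos _).le).le
    refine Filter.le_liminf_of_le ?_ ?_
    · exact Filter.isCoboundedUnder_ge_of_le _ (x := C) fun n => (aux_u v Q hmQ hQ hC0 hC hpos A n).2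
    · filter_upwards [hev, Filter.eventually_gt_atTop 0, hlim.eventually_lt_const hε1] with n hn hn0 hn1
      have hne : (A n).Nonempty := by
        by_contra hemp
        rw [Set.not_nonempty_iff_eq_empty] at hemp
        have e1 := hI n hn0
        have e2 : typeI X A n = 1 := by
          unfold typeI
          rw [hX, aux_mix w P hm hP, hemp]
          simp [prob, aux_mass _ (hP _).2]
        linarith
      have hlow : 0 < typeII Y A n :=
        (Real.exp_pos _).trans_le (aux_lower v Q hmQ hQ hC hpos (A n) hne)
      have hn' : (0:ℝ) < n := by exact_mod_cast hn0
      have hup : typeII Y A n ≤ Real.exp (-(n * (R - γ))) := by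
        refine (hII n hn0).trans ?_
        calc _ ≤ Real.exp (-(n * (R - γ/2))) * Real.exp (n * (γ/2)) := by gcongr
          _ = _ := by rw [← Real.exp_add]; congr 1; ring
      have := (Real.log_le_iff_le_exp hlow).mpr hup
      rw [one_div (typeII Y A n), Real.log_inv, one_div_mul_eq_div, le_div_iff₀ hn']
      linarith

lemma aux_conv_pt {α Λ : Type*} [Fintype α] [MeasurableSpace Λ]
    (v : Measure Λ) [IsProbabilityMeasure v]
    (p : α → ℝ) (hp : p ∈ stdSimplex ℝ α)
    (Q : Λ → α → ℝ) (hmQ : ∀ a, Measurable fun σ => Q σ a) (hQ : ∀ σ, Q σ ∈ stdSimplex ℝ α)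
    (hpos : ∀ σ a, 0 < Q σ a) {C : ℝ} (hC0 : 0 ≤ C)
    (hC : ∀ σ a, |Real.log (Q σ a)| ≤ C) (h r : ℝ)
    (h2 : ∀ η > 0, v {σ | KL p (Q σ) < h + η} ≠ 0) (hr : h < r)
    (A : (n : ℕ) → Set (Fin n → α))
    (hA : ∀ᶠ n in Filter.atTop, typeII (fun n x => ∫ σ, (∏ i, Q σ (x i)) ∂v) A n
      ≤ Real.exp (-(n * r))) :
    Filter.Tendsto (fun n => prob (fun x : Fin n → α => ∏ i, p (x i)) (A n)) Filter.atTop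
      (nhds 0) := by
  set η : ℝ := (r - h)/3 with hη
  have hη0 : 0 < η := by rw [hη]; linarith
  set S : Set Λ := {σ | KL p (Q σ) < h + η} with hS
  have hSm : MeasurableSet S := by
    refine measurableSet_lt ?_ measurable_const
    unfold KL
    exact Finset.measurable_sum _ fun a _ => (Real.measurable_log.comp ((hmQ a).const_div _)).const_mul _
  set s : ℝ := v.real S with hs
  have hs0 : 0 < s := by
    rw [hs, Measure.real]; exact ENNReal.toReal_pos (h2 η hη0) (measure_ne_top _ _)
  set L : ℝ := ∑ a, (|Real.log (p a)| + C) + 1 with hL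
  have hL0 : 0 < L := by
    have : 0 ≤ ∑ a, (|Real.log (p a)| + C) := Finset.sum_nonneg fun a _ => by positivity
    linarith
  set δ : ℝ := η / L with hδ
  have hδ0 : 0 < δ := by positivity
  set K : ℝ := Fintype.card α / δ^2
  have hpn : ∀ {n : ℕ} (x : Fin n → α), 0 ≤ ∏ i, p (x i) := fun x =>
    Finset.prod_nonneg fun i _ => hp.1 _
  have hqn : ∀ {n : ℕ} (x : Fin n → α), 0 ≤ ∫ σ, (∏ i, Q σ (x i)) ∂v := fun x =>
    integral_nonneg fun σ => Finset.prod_nonneg fun i _ => (hpos σ _).le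
  have hpt : ∀ {n : ℕ} (hn : 0 < n) (x : Fin n → α), x ∉ atyp p n δ →
      ∏ i, p (x i) ≤ (1/s) * Real.exp (n * (h + 2*η)) * ∫ σ, (∏ i, Q σ (x i)) ∂v := by
    intro n hn x hx
    have hn' : (0:ℝ) < n := by exact_mod_cast hn
    by_cases hz : ∀ i, 0 < p (x i)
    · have hσ : ∀ σ ∈ S, Real.exp (-(n * (h + 2*η))) * ∏ i, p (x i) ≤ ∏ i, Q σ (x i) := by
        intro σ hσ
        have e := aux_change p (Q σ) x hz (fun i => hpos σ _)
        rw [aux_emp_sum hn x (fun a => Real.log (p a / Q σ a))] at e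
        have hb : ∑ a, empA x a * Real.log (p a / Q σ a) ≤ h + 2 * η := by
          have h3 : ∑ a, empA x a * Real.log (p a / Q σ a) - KL p (Q σ) ≤ δ * L := by
            unfold KL
            rw [← Finset.sum_sub_distrib]
            calc _ ≤ ∑ a, δ * (|Real.log (p a)| + C) := by
                  refine Finset.sum_le_sum fun a _ => ?_
                  have ha : |empA x a - p a| ≤ δ := by
                    by_contra hcon; exact hx ⟨a, not_le.mp hcon⟩
                  have hl : |Real.log (p a / Q σ a)| ≤ |Real.log (p a)| + C := by
                    by_cases h0 : p a = 0
                    · simp [h0, hC0]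
                    · rw [Real.log_div h0 (hpos σ a).ne']
                      exact (abs_sub _ _).trans (by gcongr; exact hC σ a)
                  calc _ = (empA x a - p a) * Real.log (p a / Q σ a) := by ring
                    _ ≤ |(empA x a - p a) * Real.log (p a / Q σ a)| := le_abs_self _
                    _ ≤ _ := by rw [abs_mul]; gcongr
              _ = δ * (L - 1) := by rw [← Finset.mul_sum, hL]; ring
              _ ≤ _ := by nlinarith
          have h4 : δ * L = η := by rw [hδ]; field_simp
          have h5 : KL p (Q σ) < h + η := hσ
          linarith
        rw [e, ← mul_assoc, ← Real.exp_add]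
        refine mul_le_of_le_one_left (Finset.prod_nonneg fun i _ => (hpos σ _).le) ?_
        refine Real.exp_le_one_iff.mpr ?_
        nlinarith
      have h6 : s * (Real.exp (-(n * (h + 2*η))) * ∏ i, p (x i)) ≤ ∫ σ, (∏ i, Q σ (x i)) ∂v := by
        calc _ = ∫ σ in S, (Real.exp (-(n * (h + 2*η))) * ∏ i, p (x i)) ∂v := by
              rw [setIntegral_const, smul_eq_mul]
          _ ≤ ∫ σ in S, (∏ i, Q σ (x i)) ∂v :=
              setIntegral_mono_on (integrable_const _).integrableOn
                (aux_int_prod v Q hmQ hQ x).integrableOn hSm hσ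
          _ ≤ _ := setIntegral_le_integral (aux_int_prod v Q hmQ hQ x)
              (Filter.Eventually.of_forall fun σ => Finset.prod_nonneg fun i _ => (hpos σ _).le)
      have h7 : Real.exp (n * (h + 2*η)) * Real.exp (-(n * (h + 2*η))) = 1 := by
        rw [← Real.exp_add]; simp
      calc ∏ i, p (x i) = (1/s) * Real.exp (n * (h + 2*η)) *
            (s * (Real.exp (-(n * (h + 2*η))) * ∏ i, p (x i))) := by
            have : (1/s) * s = 1 := by field_simp
            calc _ = ((1/s) * s) * (Real.exp (n * (h + 2*η)) * Real.exp (-(n * (h + 2*η)))) * ∏ i, p (x i) := by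
                  rw [this, h7]; ring
              _ = _ := by ring
        _ ≤ _ := mul_le_mul_of_nonneg_left h6 (by positivity)
    · push Not at hz
      obtain ⟨i, hi⟩ := hz
      have : p (x i) = 0 := le_antisymm hi (hp.1 _)
      rw [Finset.prod_eq_zero (Finset.mem_univ i) this]
      have := hqn x
      positivity
  have hbound : ∀ᶠ n : ℕ in Filter.atTop, prob (fun x : Fin n → α => ∏ i, p (x i)) (A n) ≤
      K / n + (1/s) * (Real.exp (-η))^n := by
    filter_upwards [hA, Filter.eventually_gt_atTop 0] with n hn hn0
    calc prob (fun x : Fin n → α => ∏ i, p (x i)) (A n)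
        ≤ prob (fun x : Fin n → α => ∏ i, p (x i)) (atyp p n δ) +
          (1/s) * Real.exp (n * (h + 2*η)) * typeII (fun n x => ∫ σ, (∏ i, Q σ (x i)) ∂v) A n := by
          unfold typeII prob
          rw [Finset.mul_sum, ← Finset.sum_add_distrib]
          refine Finset.sum_le_sum fun x _ => ?_
          have hi1 : 0 ≤ (atyp p n δ).indicator (fun x : Fin n → α => ∏ i, p (x i)) x :=
            Set.indicator_nonneg (fun y _ => hpn y) x
          by_cases hx : x ∈ A n
          · rw [Set.indicator_of_mem hx, Set.indicator_of_mem hx]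
            by_cases hx2 : x ∈ atyp p n δ
            · rw [Set.indicator_of_mem hx2]
              have := hqn x
              have : 0 ≤ (1/s) * Real.exp (n * (h + 2*η)) * ∫ σ, (∏ i, Q σ (x i)) ∂v := by positivity
              linarith
            · have := hpt hn0 x hx2
              linarith
          · rw [Set.indicator_of_notMem hx, Set.indicator_of_notMem hx]
            simpa using hi1
      _ ≤ K / n + (1/s) * Real.exp (n * (h + 2*η)) * Real.exp (-(n*r)) := by
          have := aux_cheb p hp hn0 hδ0
          gcongr
      _ = _ := by
          rw [mul_assoc, ← Real.exp_add, ← Real.exp_nat_mul]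
          congr 3
          have : r = h + 3 * η := by rw [hη]; ring
          rw [this]; ring
  refine squeeze_zero' (Filter.Eventually.of_forall fun n => aux_prob_nonneg _ hpn _) hbound ?_
  have t1 := tendsto_const_div_atTop_nhds_zero_nat K
  have t2 := (tendsto_pow_atTop_nhds_zero_of_lt_one (Real.exp_pos (-η)).le
    (by rw [Real.exp_lt_one_iff]; linarith)).const_mul (1/s)
  simpa using t1.add t2

lemma aux_conv {α Θ Λ : Type*} [Fintype α] [MeasurableSpace Θ] [MeasurableSpace Λ]
    (w : Measure Θ) [IsProbabilityMeasure w] (v : Measure Λ) [IsProbabilityMeasure v]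
    (P : Θ → α → ℝ) (hm : ∀ a, Measurable fun θ => P θ a) (hP : ∀ θ, P θ ∈ stdSimplex ℝ α)
    (Q : Λ → α → ℝ) (hmQ : ∀ a, Measurable fun σ => Q σ a) (hQ : ∀ σ, Q σ ∈ stdSimplex ℝ α)
    (hpos : ∀ σ a, 0 < Q σ a) {C : ℝ} (hC0 : 0 ≤ C)
    (hC : ∀ σ a, |Real.log (Q σ a)| ≤ C) (h : (α → ℝ) → ℝ)
    (h2 : ∀ p ∈ stdSimplex ℝ α, ∀ η > 0, v {σ | KL p (Q σ) < h p + η} ≠ 0)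
    (hB : ∀ r, MeasurableSet {θ | h (P θ) < r})
    {ε : ℝ} {R γ : ℝ} (hγ : 0 < γ)
    (hR : EpsAchievable (fun n x => ∫ θ, (∏ i, P θ (x i)) ∂w)
        (fun n x => ∫ σ, (∏ i, Q σ (x i)) ∂v) ε R) :
    (w {θ | h (P θ) < R - γ}).toReal ≤ ε := by
  obtain ⟨A, hA1, hA2⟩ := hR
  set X : (n : ℕ) → (Fin n → α) → ℝ := fun n x => ∫ θ, (∏ i, P θ (x i)) ∂w with hX
  set Y : (n : ℕ) → (Fin n → α) → ℝ := fun n x => ∫ σ, (∏ i, Q σ (x i)) ∂v with hY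
  have hev : ∀ᶠ n in Filter.atTop, typeII Y A n ≤ Real.exp (-(n * (R - γ))) := by
    have hlt : R - γ < Filter.liminf (fun n : ℕ => (1 / (n : ℝ)) * Real.log (1 / typeII Y A n))
      Filter.atTop := by linarith
    have hbd : Filter.IsBoundedUnder (· ≥ ·) Filter.atTop
        (fun n : ℕ => (1 / (n : ℝ)) * Real.log (1 / typeII Y A n)) :=
      Filter.isBoundedUnder_of ⟨0, fun n => (aux_u v Q hmQ hQ hC0 hC hpos A n).1⟩
    filter_upwards [Filter.eventually_lt_of_lt_liminf hlt hbd, Filter.eventually_gt_atTop 0]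
      with n hn hn0
    have hn' : (0:ℝ) < n := by exact_mod_cast hn0
    have h0 : 0 ≤ typeII Y A n := (aux_mix01 v Q hmQ hQ (A n)).1
    rcases h0.eq_or_lt with h0 | h0
    · rw [← h0]; exact (Real.exp_pos _).le
    · rw [one_div (typeII Y A n), Real.log_inv, one_div_mul_eq_div, lt_div_iff₀ hn'] at hn
      refine (Real.log_le_iff_le_exp h0).mp ?_
      linarith
  set B : Set Θ := {θ | h (P θ) < R - γ} with hBdef
  have hBm : MeasurableSet B := hB _
  set F : ℕ → Θ → ℝ := fun n θ => B.indicator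
    (fun θ => prob (fun x : Fin n → α => ∏ i, P θ (x i)) (A n)) θ with hF
  have hFi : ∀ n, Integrable (F n) w := fun n => (aux_int_prob w P hm hP (A n)).indicator hBm
  have hlim : Filter.Tendsto (fun n => ∫ θ, F n θ ∂w) Filter.atTop (nhds 0) := by
    have := tendsto_integral_of_dominated_convergence (μ := w) (F := F) (f := fun _ => 0) (fun _ => 1)
      (fun n => (hFi n).aestronglyMeasurable) (integrable_const _) ?_ ?_
    · simpa using this
    · intro n
      refine Filter.Eventually.of_forall fun θ => ?_
      have h01 := aux_prob01 P hP (A n) θ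
      by_cases hθ : θ ∈ B
      · simp only [hF, Set.indicator_of_mem hθ]
        rw [Real.norm_of_nonneg h01.1]; exact h01.2
      · simp only [hF, Set.indicator_of_notMem hθ]; simp
    · refine Filter.Eventually.of_forall fun θ => ?_
      by_cases hθ : θ ∈ B
      · simp only [hF, Set.indicator_of_mem hθ]
        exact aux_conv_pt v (P θ) (hP θ) Q hmQ hQ hpos hC0 hC (h (P θ)) (R - γ) (h2 _ (hP θ)) hθ A hev
      · simp only [hF, Set.indicator_of_notMem hθ]
        exact tendsto_const_nhds
  have hlow : ∀ n, (w B).toReal - ∫ θ, F n θ ∂w ≤ typeI X A n := by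
    intro n
    have hint : Integrable (B.indicator (fun _ => (1:ℝ))) w :=
      (integrable_const _).indicator hBm
    have e : (w B).toReal = ∫ θ, B.indicator (fun _ => (1:ℝ)) θ ∂w := by
      rw [integral_indicator_const _ hBm]; simp [Measure.real]
    unfold typeI
    rw [hX, aux_mix w P hm hP, e, ← integral_sub hint (hFi n)]
    refine integral_mono (hint.sub (hFi n)) (aux_int_prob w P hm hP _) fun θ => ?_
    have h3 := aux_prob_compl (fun x : Fin n → α => ∏ i, P θ (x i)) (A n)
    rw [aux_mass (P θ) (hP θ).2 n] at h3
    by_cases hθ : θ ∈ B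
    · simp only [hF, Set.indicator_of_mem hθ]; linarith
    · simp only [hF, Set.indicator_of_notMem hθ]
      simpa using (aux_prob01 P hP (A n)ᶜ θ).1
  refine le_trans ?_ hA1
  have ht : Filter.Tendsto (fun n => (w B).toReal - ∫ θ, F n θ ∂w) Filter.atTop
      (nhds (w B).toReal) := by simpa using hlim.const_sub (w B).toReal
  rw [← ht.limsup_eq]
  refine Filter.limsup_le_limsup (Filter.Eventually.of_forall hlow) ?_ ?_
  · exact ht.isCoboundedUnder_le
  · exact Filter.isBoundedUnder_of ⟨1, fun n => (aux_mix01 w P hm hP (A n)ᶜ).2⟩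

/-- **Theorem (first-order `ε`-optimum exponent when both hypotheses are mixed
memoryless):** with a compact alternative mixing space `Σ`, a continuous family
`σ ↦ P̄_σ` of everywhere-positive distributions, and `σ(·)` attaining the
`v`-essential infimum `v-ess inf_σ D(P‖P̄_σ)`, one has
`B_ε(X‖X̄) = sup{ R : w({θ : D(P_θ‖P̄_{σ(P_θ)}) < R}) ≤ ε }`. -/
theorem stmt_12 {𝒳 Θ Λ : Type*} [Fintype 𝒳] [MeasurableSpace Θ]
    [TopologicalSpace Λ] [CompactSpace Λ] [MeasurableSpace Λ] [BorelSpace Λ]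
    (w : Measure Θ) [IsProbabilityMeasure w]
    (v : Measure Λ) [IsProbabilityMeasure v]
    (P : Θ → 𝒳 → ℝ)
    (hmeas : ∀ x : 𝒳, Measurable fun θ => P θ x)
    (hdist : ∀ θ, (∀ x, 0 ≤ P θ x) ∧ (∑ x, P θ x) = 1)
    (Pbar : Λ → 𝒳 → ℝ)
    (hcont : ∀ x : 𝒳, Continuous fun σ => Pbar σ x)
    (hbardist : ∀ σ, (∀ x, 0 < Pbar σ x) ∧ (∑ x, Pbar σ x) = 1)
    (sigma : (𝒳 → ℝ) → Λ)
    (hsigma : ∀ p : 𝒳 → ℝ, (∀ x, 0 ≤ p x) → (∑ x, p x) = 1 →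
      KL p (Pbar (sigma p)) =
        sSup {β : ℝ | v {σ | KL p (Pbar σ) < β} = 0})
    (ε : ℝ) (hε0 : 0 ≤ ε) (hε1 : ε < 1) :
    Beps (fun n x => ∫ θ, (∏ i, P θ (x i)) ∂w)
        (fun n x => ∫ σ, (∏ i, Pbar σ (x i)) ∂v) ε =
      sSup {R : ℝ | (w {θ | KL (P θ) (Pbar (sigma (P θ))) < R}).toReal ≤ ε} := by
  have hP : ∀ θ, P θ ∈ stdSimplex ℝ 𝒳 := fun θ => hdist θ
  have hpos : ∀ σ a, 0 < Pbar σ a := fun σ => (hbardist σ).1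
  have hQ : ∀ σ, Pbar σ ∈ stdSimplex ℝ 𝒳 := fun σ => ⟨fun a => (hpos σ a).le, (hbardist σ).2⟩
  have hmQ : ∀ a, Measurable fun σ => Pbar σ a := fun a => (hcont a).measurable
  obtain ⟨C, hC0, hC⟩ : ∃ C : ℝ, 0 ≤ C ∧ ∀ σ a, |Real.log (Pbar σ a)| ≤ C := by
    have hb : ∀ a, ∃ c : ℝ, ∀ σ, |Real.log (Pbar σ a)| ≤ c := by
      intro a
      have hcl : Continuous fun σ => |Real.log (Pbar σ a)| :=
        ((hcont a).log fun σ => (hpos σ a).ne').abs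
      obtain ⟨c, hc⟩ := (isCompact_range hcl).bddAbove
      exact ⟨c, fun σ => hc ⟨σ, rfl⟩⟩
    choose c hc using hb
    refine ⟨∑ a, |c a|, Finset.sum_nonneg fun a _ => abs_nonneg _, fun σ a => ?_⟩
    exact ((hc a σ).trans (le_abs_self _)).trans
      (Finset.single_le_sum (f := fun a => |c a|) (fun b _ => abs_nonneg _) (Finset.mem_univ a))
  set h : (𝒳 → ℝ) → ℝ := fun p => KL p (Pbar (sigma p)) with hh
  have hess : ∀ p ∈ stdSimplex ℝ 𝒳, (∀ᵐ σ ∂v, h p ≤ KL p (Pbar σ)) ∧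
      ∀ η > 0, v {σ | KL p (Pbar σ) < h p + η} ≠ 0 := by
    intro p hp
    refine aux_ess v (fun σ => KL p (Pbar σ)) (∑ a, |p a| * (|Real.log (p a)| + C)) ?_ (h p)
      (hsigma p hp.1 hp.2)
    intro σ
    unfold KL
    refine (Finset.abs_sum_le_sum_abs _ _).trans (Finset.sum_le_sum fun a _ => ?_)
    rw [abs_mul]
    by_cases h0 : p a = 0
    · simp [h0]
    · rw [Real.log_div h0 (hpos σ a).ne']
      gcongr
      exact (abs_sub _ _).trans (by gcongr; exact hC σ a)
  have h1 := fun p hp => (hess p hp).1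
  have h2 := fun p hp => (hess p hp).2
  have hc : ContinuousOn h (stdSimplex ℝ 𝒳) := aux_cont v Pbar hpos hC h h1 h2
  have hhm : Measurable fun θ => h (P θ) := by
    have hc' := (continuousOn_iff_continuous_restrict.mp hc).measurable
    have hPm : Measurable fun θ => (⟨P θ, hP θ⟩ : stdSimplex ℝ 𝒳) :=
      (measurable_pi_iff.mpr hmeas).subtype_mk
    exact hc'.comp hPm
  have hB : ∀ r, MeasurableSet {θ | h (P θ) < r} := fun r => measurableSet_lt hhm measurable_const
  obtain ⟨M, hM⟩ := (isCompact_stdSimplex ℝ 𝒳).exists_bound_of_continuousOn hc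
  set X : (n : ℕ) → (Fin n → 𝒳) → ℝ := fun n x => ∫ θ, (∏ i, P θ (x i)) ∂w with hX
  set Y : (n : ℕ) → (Fin n → 𝒳) → ℝ := fun n x => ∫ σ, (∏ i, Pbar σ (x i)) ∂v with hY
  set SR : Set ℝ := {R : ℝ | (w {θ | h (P θ) < R}).toReal ≤ ε} with hSR
  have hRL : ∀ R ∈ SR, ∀ γ > 0, EpsAchievable X Y ε (R - γ) := fun R hR γ hγ =>
    aux_direct w v P hmeas hP Pbar hmQ hQ hpos hC0 hC h h1 hc hB hε1 hγ hR
  have hLR : ∀ R, EpsAchievable X Y ε R → ∀ γ > 0, R - γ ∈ SR := fun R hR γ hγ =>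
    aux_conv w v P hmeas hP Pbar hmQ hQ hpos hC0 hC h h2 hB hγ hR
  have hne : SR.Nonempty := by
    refine ⟨-M, ?_⟩
    have : {θ | h (P θ) < -M} = ∅ := by
      ext θ
      simp only [Set.mem_setOf_eq, Set.mem_empty_iff_false, iff_false, not_lt]
      exact neg_le_of_abs_le (hM _ (hP θ))
    simp only [hSR, Set.mem_setOf_eq, this]
    simpa using hε0
  have hbd : BddAbove SR := by
    refine ⟨M, fun R hR => ?_⟩
    by_contra hlt
    push Not at hlt
    have : {θ | h (P θ) < R} = Set.univ := by
      ext θ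
      simp only [Set.mem_setOf_eq, Set.mem_univ, iff_true]
      exact (le_of_abs_le (hM _ (hP θ))).trans_lt hlt
    simp only [hSR, Set.mem_setOf_eq, this] at hR
    simp at hR
    linarith
  have hneL : ({R : ℝ | EpsAchievable X Y ε R}).Nonempty := by
    obtain ⟨R, hR⟩ := hne
    exact ⟨R - 1, hRL R hR 1 one_pos⟩
  have hbdL : BddAbove {R : ℝ | EpsAchievable X Y ε R} := by
    obtain ⟨M', hM'⟩ := hbd
    refine ⟨M' + 1, fun R hR => ?_⟩
    have := hM' (hLR R hR 1 one_pos)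
    linarith
  unfold Beps
  refine le_antisymm (csSup_le hneL fun R hR => ?_) (csSup_le hne fun R hR => ?_)
  · refine le_of_forall_pos_le_add fun γ hγ => ?_
    have := le_csSup hbd (hLR R hR γ hγ)
    linarith
  · refine le_of_forall_pos_le_add fun γ hγ => ?_
    have := le_csSup hbdL (show R - γ ∈ {R : ℝ | EpsAchievable X Y ε R} from hRL R hR γ hγ)
    linarith
end
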